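/- arXiv:2103.03298 — 4 statements merged into one kernel-verified Lean document; each statement's English description precedes it below -/
import Mathlib

section
/- Let a ∈ {7, 11, 19, 43, 67, 163} and let n be a positive integer. Suppose x, y, z are integers with gcd(x,y) = 1 satisfying x^2 + a·y^{2n} = 4z^3. Then there exist odd integers u, v with gcd(u,v) = 1 and u·v ≠ 0 such that 4x = u(u^2 − 3a·v^2), 4y^n = v(3u^2 − a·v^2), and 4z = u^2 + a·v^2. -/
open QuadraticAlgebra in
theorem aux_norm_def (m : ℤ) (t : QuadraticAlgebra ℤ (-m) 1) :
    t.norm = t.re ^ 2 + t.re * t.im + m * t.im ^ 2 := by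
  rw [norm_def]; ring

theorem aux_norm_nonneg (m : ℤ) (hm : 2 ≤ m) (t : QuadraticAlgebra ℤ (-m) 1) :
    0 ≤ t.norm := by
  rw [aux_norm_def]
  nlinarith [sq_nonneg (2 * t.re + t.im), sq_nonneg t.im]

theorem aux_norm_eq_zero (m : ℤ) (hm : 2 ≤ m) (t : QuadraticAlgebra ℤ (-m) 1)
    (h : t.norm = 0) : t = 0 := by
  rw [aux_norm_def] at h
  have h1 : t.im ^ 2 = 0 := by
    nlinarith [sq_nonneg (2 * t.re + t.im), sq_nonneg t.im]
  have h2 : t.im = 0 := by simpa using h1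
  have h3 : t.re = 0 := by simpa [h2] using h
  ext <;> simp [h2, h3]

theorem aux_domain (m : ℤ) (hm : 2 ≤ m) : IsDomain (QuadraticAlgebra ℤ (-m) 1) := by
  have : NoZeroDivisors (QuadraticAlgebra ℤ (-m) 1) := by
    constructor
    intro s t hst
    have h : s.norm * t.norm = 0 := by rw [← map_mul, hst, QuadraticAlgebra.norm_zero]
    rcases mul_eq_zero.mp h with h | h
    · exact Or.inl (aux_norm_eq_zero m hm s h)
    · exact Or.inr (aux_norm_eq_zero m hm t h)
  exact NoZeroDivisors.to_isDomain _

/-- Integer form of Dirichlet's approximation. -/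
theorem aux_dirichlet (N : ℕ) (hN : 0 < N) (B n : ℤ) (hn : 0 < n) :
    ∃ j k : ℤ, 0 < k ∧ k ≤ N ∧ |k * B - j * n| * (N + 1) ≤ n := by
  obtain ⟨j, k, hk, hkN, h⟩ := Real.exists_int_int_abs_mul_sub_le ((B : ℝ) / n) hN
  refine ⟨j, k, hk, hkN, ?_⟩
  have hn' : (0 : ℝ) < n := by exact_mod_cast hn
  have hN' : (0 : ℝ) < (N : ℝ) + 1 := by positivity
  have e : (k : ℝ) * ((B : ℝ) / n) - j = (k * B - j * n) / n := by field_simp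
  rw [e, abs_div, abs_of_pos hn', div_le_div_iff₀ hn' hN', one_mul] at h
  exact_mod_cast h

theorem aux_round (C n : ℤ) (hn : 0 < n) : ∃ i : ℤ, |C - 2 * i * n| ≤ n := by
  refine ⟨(C + n) / (2 * n), ?_⟩
  have h1 := Int.emod_add_mul_ediv (C + n) (2 * n)
  have h2 := Int.emod_nonneg (C + n) (show 2 * n ≠ 0 by omega)
  have h3 := Int.emod_lt_of_pos (C + n) (show 0 < 2 * n by omega)
  have e : 2 * ((C + n) / (2 * n)) * n = C + n - (C + n) % (2 * n) := by linarith
  rw [e, abs_le]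
  constructor <;> linarith

theorem aux_approx (m : ℤ) (hm : 2 ≤ m) (N : ℕ) (hN : 0 < N)
    (hmN : 4 * m - 1 < 3 * ((N : ℤ) + 1) ^ 2)
    (α β : QuadraticAlgebra ℤ (-m) 1) (hβ : 0 < β.norm) :
    ∃ (k : ℤ) (t : QuadraticAlgebra ℤ (-m) 1), 0 < k ∧ k ≤ N ∧
      ((k : QuadraticAlgebra ℤ (-m) 1) * α - t * β).norm < β.norm := by
  set n := β.norm with hn
  obtain ⟨j, k, hk, hkN, h1⟩ := aux_dirichlet N hN (α * star β).im n hβ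
  obtain ⟨i, h2⟩ := aux_round (2 * (k * (α * star β).re) + (k * (α * star β).im - j * n)) n hβ
  refine ⟨k, ⟨i, j⟩, hk, hkN, ?_⟩
  set A := (α * star β).re with hA
  set B := (α * star β).im with hB
  have e : ((k : QuadraticAlgebra ℤ (-m) 1) * α - ⟨i, j⟩ * β) * star β =
      ⟨k * A - i * n, k * B - j * n⟩ := by
    have e1 : ((k : QuadraticAlgebra ℤ (-m) 1) * α - ⟨i, j⟩ * β) * star β =
      (k : QuadraticAlgebra ℤ (-m) 1) * (α * star β) - ⟨i, j⟩ * (β * star β) := by ring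
    rw [e1, ← QuadraticAlgebra.algebraMap_norm_eq_mul_star, ← hn]
    ext
    · simp only [QuadraticAlgebra.re_sub, QuadraticAlgebra.re_mul, QuadraticAlgebra.re_intCast,
        QuadraticAlgebra.im_intCast, QuadraticAlgebra.algebraMap_re,
        QuadraticAlgebra.algebraMap_im, hA]
      simp
    · simp only [QuadraticAlgebra.im_sub, QuadraticAlgebra.im_mul, QuadraticAlgebra.re_intCast,
        QuadraticAlgebra.im_intCast, QuadraticAlgebra.algebraMap_re,
        QuadraticAlgebra.algebraMap_im, hB]
      simp
  have e2 := congrArg QuadraticAlgebra.norm e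
  rw [map_mul, QuadraticAlgebra.norm_star, ← hn, aux_norm_def m ⟨k * A - i * n, k * B - j * n⟩] at e2
  simp only at e2
  set M := ((k : QuadraticAlgebra ℤ (-m) 1) * α - ⟨i, j⟩ * β).norm
  set P := k * A - i * n with hP
  set Q := k * B - j * n with hQ
  have e3 : 2 * (k * A) + Q - 2 * i * n = 2 * P + Q := by rw [hP]; ring
  rw [e3] at h2
  have h3 : (2 * P + Q) ^ 2 ≤ n ^ 2 := by
    rw [← sq_abs]; exact pow_le_pow_left₀ (abs_nonneg _) h2 2
  have h4 : Q ^ 2 * ((N : ℤ) + 1) ^ 2 ≤ n ^ 2 := by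
    rw [← sq_abs, ← mul_pow]; exact pow_le_pow_left₀ (by positivity) h1 2
  have h5 : (4 * m - 1) * Q ^ 2 < 3 * n ^ 2 := by
    rcases eq_or_ne Q 0 with hQ0 | hQ0
    · rw [hQ0]; nlinarith
    · have : 0 < Q ^ 2 := by positivity
      nlinarith
  have h6 : M * n < n * n := by nlinarith
  exact lt_of_mul_lt_mul_right h6 hβ.le

theorem aux_pid (m : ℤ) (hm : 2 ≤ m) (N : ℕ) (hN : 0 < N)
    (hmN : 4 * m - 1 < 3 * ((N : ℤ) + 1) ^ 2)
    (hin : ∀ p : ℕ, p ≤ N → p.Prime → ∀ x y : ℤ, (p : ℤ) ∣ x ^ 2 + x * y + m * y ^ 2 →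
      (p : ℤ) ∣ x ∧ (p : ℤ) ∣ y) :
    IsPrincipalIdealRing (QuadraticAlgebra ℤ (-m) 1) := by
  have := aux_domain m hm
  constructor
  intro I
  by_cases hI : I = ⊥
  · rw [hI]; exact bot_isPrincipal
  obtain ⟨β₀, hβ₀, hβ₀0⟩ := Submodule.exists_mem_ne_zero_of_ne_bot hI
  -- minimal norm
  obtain ⟨β, ⟨hβI, hβ0⟩, hmin⟩ := WellFounded.has_min
    (measure (fun t : QuadraticAlgebra ℤ (-m) 1 => t.norm.toNat)).wf
    {t | t ∈ I ∧ t ≠ 0} ⟨β₀, hβ₀, hβ₀0⟩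
  have hpos : ∀ t : QuadraticAlgebra ℤ (-m) 1, t ≠ 0 → 0 < t.norm := fun t ht =>
    lt_of_le_of_ne (aux_norm_nonneg m hm t) (fun h => ht (aux_norm_eq_zero m hm t h.symm))
  have hmin' : ∀ t ∈ I, t.norm < β.norm → t = 0 := by
    intro t ht hlt
    by_contra h0
    have h1 := hmin t ⟨ht, h0⟩
    have h2 := hpos β hβ0
    have h3 := hpos t h0
    apply h1
    change t.norm.toNat < β.norm.toNat
    omega
  have hβn := hpos β hβ0
  -- prime step
  have hprime : ∀ p : ℕ, p ≤ N → p.Prime → ∀ α ∈ I,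
      β ∣ (p : QuadraticAlgebra ℤ (-m) 1) * α → β ∣ α := by
    intro p hpN hp α hα ⟨t, ht⟩
    have hp0 : (p : QuadraticAlgebra ℤ (-m) 1) ≠ 0 := by exact_mod_cast hp.ne_zero
    have hpz : (0 : ℤ) < p := by exact_mod_cast hp.pos
    by_cases hd : (p : ℤ) ∣ t.norm
    · rw [aux_norm_def] at hd
      obtain ⟨⟨r, hr⟩, ⟨s, hs⟩⟩ := hin p hpN hp _ _ hd
      refine ⟨⟨r, s⟩, ?_⟩
      apply mul_left_cancel₀ hp0
      rw [ht]
      have : t = (p : QuadraticAlgebra ℤ (-m) 1) * ⟨r, s⟩ := by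
        ext <;> simp [hr, hs]
      rw [this]; ring
    · exfalso
      set q := t.norm / p
      set r := t.norm % p
      have hqr : r + p * q = t.norm := Int.emod_add_mul_ediv _ _
      have hr0 : 0 ≤ r := Int.emod_nonneg _ hpz.ne'
      have hrp : r < p := Int.emod_lt_of_pos _ hpz
      have hrne : r ≠ 0 := fun h => hd (Int.dvd_of_emod_eq_zero h)
      have hT : star t * t = ((t.norm : ℤ) : QuadraticAlgebra ℤ (-m) 1) := by
        rw [mul_comm, ← QuadraticAlgebra.algebraMap_norm_eq_mul_star]; rfl
      have key : (p : QuadraticAlgebra ℤ (-m) 1) * (star t * α - (q : ℤ) * β) =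
          (r : ℤ) * β := by
        have : (p : QuadraticAlgebra ℤ (-m) 1) * (star t * α - (q : ℤ) * β) =
          star t * (p * α) - p * q * β := by ring
        rw [this, ht]
        have : star t * (β * t) = (star t * t) * β := by ring
        rw [this, hT, ← hqr]
        push_cast; ring
      have hmem : star t * α - (q : ℤ) * β ∈ I :=
        I.sub_mem (I.mul_mem_left _ hα) (I.mul_mem_left _ hβI)
      have kn := congrArg QuadraticAlgebra.norm key
      rw [map_mul, map_mul, QuadraticAlgebra.norm_natCast, QuadraticAlgebra.norm_intCast] at kn
      have hlt : (star t * α - (q : ℤ) * β).norm < β.norm := by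
        have h1 : r ^ 2 < (p : ℤ) ^ 2 := by nlinarith
        have h2 : (p : ℤ) ^ 2 * (star t * α - (q : ℤ) * β).norm < (p : ℤ) ^ 2 * β.norm := by
          rw [kn]; exact mul_lt_mul_of_pos_right h1 hβn
        exact lt_of_mul_lt_mul_left h2 (by positivity)
      rw [hmin' _ hmem hlt, mul_zero] at key
      have := mul_eq_zero.mp key.symm
      rcases this with h | h
      · exact hrne (by exact_mod_cast h)
      · exact hβ0 h
  have hstep : ∀ k : ℕ, 0 < k → k ≤ N → ∀ α ∈ I,
      β ∣ (k : QuadraticAlgebra ℤ (-m) 1) * α → β ∣ α := by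
    intro k
    induction k using Nat.strong_induction_on with
    | _ k ih =>
      intro hk hkN α hα hd
      rcases eq_or_ne k 1 with h1 | h1
      · simpa [h1] using hd
      · have hp := Nat.minFac_prime h1
        obtain ⟨l, hl⟩ := Nat.minFac_dvd k
        have hl0 : 0 < l := by
          rcases Nat.eq_zero_or_pos l with h | h
          · rw [h] at hl; omega
          · exact h
        have hlk : l < k := by
          have := hp.two_le
          nlinarith
        have hpk : k.minFac ≤ N := (Nat.minFac_le hk).trans hkN
        apply ih l hlk hl0 (by omega) α hα
        apply hprime _ hpk hp _ (I.mul_mem_left _ hα)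
        rw [← mul_assoc, ← Nat.cast_mul, ← hl]
        exact hd
  refine ⟨⟨β, ?_⟩⟩
  apply le_antisymm
  · intro α hα
    rw [Ideal.submodule_span_eq, Ideal.mem_span_singleton]
    obtain ⟨k, t, hk, hkN, hlt⟩ := aux_approx m hm N hN hmN α β hβn
    have h0 := hmin' _ (I.sub_mem (I.mul_mem_left _ hα) (I.mul_mem_left _ hβI)) hlt
    lift k to ℕ using hk.le
    refine hstep k (by omega) (by omega) α hα ⟨t, ?_⟩
    rw [mul_comm β t]
    simpa using sub_eq_zero.mp h0
  · rw [Submodule.span_singleton_le_iff_mem]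
    exact hβI

theorem aux_zmod (m : ℤ) (p : ℕ) [NeZero p]
    (h : ∀ x y : ZMod p, x ^ 2 + x * y + (m : ZMod p) * y ^ 2 = 0 → x = 0 ∧ y = 0)
    (x y : ℤ) (hd : (p : ℤ) ∣ x ^ 2 + x * y + m * y ^ 2) : (p : ℤ) ∣ x ∧ (p : ℤ) ∣ y := by
  have hd' := (ZMod.intCast_zmod_eq_zero_iff_dvd _ p).mpr hd
  push_cast at hd'
  have := h _ _ hd'
  exact ⟨(ZMod.intCast_zmod_eq_zero_iff_dvd _ p).mp this.1,
    (ZMod.intCast_zmod_eq_zero_iff_dvd _ p).mp this.2⟩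

theorem aux_all (m : ℤ) (h : m = 2 ∨ m = 3 ∨ m = 5 ∨ m = 11 ∨ m = 17 ∨ m = 41) :
    IsPrincipalIdealRing (QuadraticAlgebra ℤ (-m) 1) := by
  rcases h with rfl | rfl | rfl | rfl | rfl | rfl
  · refine aux_pid 2 (by norm_num) 1 (by norm_num) (by norm_num) ?_
    intro p hp hpp
    have := hpp.two_le
    omega
  · refine aux_pid 3 (by norm_num) 1 (by norm_num) (by norm_num) ?_
    intro p hp hpp
    have := hpp.two_le
    omega
  · refine aux_pid 5 (by norm_num) 2 (by norm_num) (by norm_num) ?_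
    intro p hp hpp
    have := hpp.two_le
    interval_cases p
    exact aux_zmod _ _ (by decide)
  · refine aux_pid 11 (by norm_num) 3 (by norm_num) (by norm_num) ?_
    intro p hp hpp
    have := hpp.two_le
    interval_cases p <;> exact aux_zmod _ _ (by decide)
  · refine aux_pid 17 (by norm_num) 4 (by norm_num) (by norm_num) ?_
    intro p hp hpp
    have := hpp.two_le
    interval_cases p <;>
      first | exact aux_zmod _ _ (by decide) | exact absurd hpp (by norm_num)
  · refine aux_pid 41 (by norm_num) 7 (by norm_num) (by norm_num) ?_
    intro p hp hpp
    have := hpp.two_le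
    interval_cases p <;>
      first | exact aux_zmod _ _ (by decide) | exact absurd hpp (by norm_num)

theorem aux_unit (m : ℤ) (hm : 2 ≤ m) (t : QuadraticAlgebra ℤ (-m) 1) (ht : IsUnit t) :
    t = 1 ∨ t = -1 := by
  rw [QuadraticAlgebra.isUnit_iff_norm_isUnit, Int.isUnit_iff] at ht
  have h0 := aux_norm_nonneg m hm t
  have h1 : t.norm = 1 := by omega
  rw [aux_norm_def] at h1
  have h2 : t.im ^ 2 < 1 := by nlinarith [sq_nonneg (2 * t.re + t.im), sq_nonneg t.im]
  have h3 : t.im = 0 := by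
    have : t.im ^ 2 = 0 := by have := sq_nonneg t.im; omega
    simpa using this
  rw [h3] at h1
  have h4 : t.re ^ 2 = 1 := by linarith
  rcases (sq_eq_one_iff (a := t.re)).mp h4 with h | h
  · left; ext <;> simp [h, h3, QuadraticAlgebra.re_one, QuadraticAlgebra.im_one]
  · right; ext <;> simp [h, h3, QuadraticAlgebra.re_one, QuadraticAlgebra.im_one]

theorem aux_main (m : ℤ) (hm : 2 ≤ m) [IsPrincipalIdealRing (QuadraticAlgebra ℤ (-m) 1)]
    (hp : Prime (4 * m - 1)) (x w z : ℤ) (hxw : IsCoprime x w)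
    (heq : x ^ 2 + (4 * m - 1) * w ^ 2 = 4 * z ^ 3) :
    ∃ u v : ℤ, Odd u ∧ Odd v ∧ Int.gcd u v = 1 ∧ u * v ≠ 0 ∧
      4 * x = u * (u ^ 2 - 3 * (4 * m - 1) * v ^ 2) ∧
      4 * w = v * (3 * u ^ 2 - (4 * m - 1) * v ^ 2) ∧
      4 * z = u ^ 2 + (4 * m - 1) * v ^ 2 := by
  have := aux_domain m hm
  -- parity
  have hpar : Even (x - w) := by
    have h : Even ((x - w) * (x + w)) := ⟨2 * z ^ 3 - 2 * m * w ^ 2, by linear_combination heq⟩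
    rcases Int.even_mul.mp h with h | h
    · exact h
    · have : x - w = x + w - 2 * w := by ring
      rw [this]; exact h.sub (even_two_mul w)
  have hxodd : ¬ Even x := by
    intro hx
    have hw : Even w := by
      have : w = x - (x - w) := by ring
      rw [this]; exact hx.sub hpar
    have := hxw.isUnit_of_dvd' hx.two_dvd hw.two_dvd
    rw [Int.isUnit_iff] at this
    omega
  obtain ⟨c, hc⟩ := hpar
  have hx : x = 2 * c + w := by linarith
  have hxz : IsCoprime x z := by
    rw [Int.isCoprime_iff_gcd_eq_one]
    by_contra hne
    obtain ⟨p, hpp, hpd⟩ := Nat.exists_prime_and_dvd hne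
    have hpz := Nat.prime_iff_prime_int.mp hpp
    have hpg : (p : ℤ) ∣ (Int.gcd x z : ℤ) := by exact_mod_cast hpd
    have hpx : (p : ℤ) ∣ x := hpg.trans (Int.gcd_dvd_left ..)
    have hpzz : (p : ℤ) ∣ z := hpg.trans (Int.gcd_dvd_right ..)
    have hnw : ¬ (p : ℤ) ∣ w := fun h => hpz.not_isUnit (hxw.isUnit_of_dvd' hpx h)
    have hd : (p : ℤ) ∣ (4 * m - 1) * w ^ 2 := by
      have e : (4 * m - 1) * w ^ 2 = z * (4 * z ^ 2) - x * x := by linear_combination heq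
      rw [e]
      exact dvd_sub (hpzz.mul_right _) (hpx.mul_right _)
    rcases hpz.dvd_or_dvd hd with h | h
    · have hass : Associated (p : ℤ) (4 * m - 1) := hpz.associated_of_dvd hp h
      have hax : 4 * m - 1 ∣ x := hass.symm.dvd.trans hpx
      have haz : 4 * m - 1 ∣ z := hass.symm.dvd.trans hpzz
      apply hnw
      apply hpz.dvd_of_dvd_pow (n := 2)
      refine hass.dvd.trans ?_
      obtain ⟨r, hr⟩ := hax
      obtain ⟨s, hs⟩ := haz
      refine ⟨4 * (4 * m - 1) * s ^ 3 - r ^ 2, ?_⟩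
      apply mul_left_cancel₀ hp.ne_zero
      rw [hr, hs] at heq
      linear_combination heq
    · exact hnw (hpz.dvd_of_dvd_pow h)
  let α : QuadraticAlgebra ℤ (-m) 1 := ⟨c, w⟩
  have hnorm : α.norm = z ^ 3 := by
    rw [aux_norm_def]
    simp only [α]
    rw [hx] at heq
    linarith
  have hmul : α * star α = (z : QuadraticAlgebra ℤ (-m) 1) ^ 3 := by
    rw [← QuadraticAlgebra.algebraMap_norm_eq_mul_star, hnorm, map_pow]; rfl
  have hadd : α + star α = (x : QuadraticAlgebra ℤ (-m) 1) := by
    ext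
    · simp [α]; linarith
    · simp [α]
  have hcop : IsCoprime α (star α) := by
    obtain ⟨r, s, hrs⟩ : IsCoprime x (z ^ 3) := hxz.pow_right
    have h := congrArg (Int.cast : ℤ → QuadraticAlgebra ℤ (-m) 1) hrs
    push_cast at h
    rw [← hadd, ← hmul] at h
    exact ⟨r, r + s * α, by rw [← h]; ring⟩
  obtain ⟨d, ⟨ε, hε⟩⟩ := exists_associated_pow_of_mul_eq_pow' hcop hmul
  obtain ⟨b, hb⟩ : ∃ b : QuadraticAlgebra ℤ (-m) 1, b ^ 3 = α := by
    rcases aux_unit m hm _ ε.isUnit with h | h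
    · exact ⟨d, by rw [← hε, h, mul_one]⟩
    · exact ⟨-d, by rw [← hε, h]; ring⟩
  have hz : b.norm = z := by
    have : b.norm ^ 3 = z ^ 3 := by rw [← map_pow, hb, hnorm]
    exact (Odd.strictMono_pow (by decide : Odd 3)).injective this
  obtain ⟨P, Q⟩ := b
  rw [aux_norm_def] at hz
  simp only at hz
  have hre := congrArg QuadraticAlgebra.re hb
  have him := congrArg QuadraticAlgebra.im hb
  simp only [pow_succ, pow_zero, one_mul, QuadraticAlgebra.mk_mul_mk, α] at hre him
  have h4x : 4 * x = (2 * P + Q) * ((2 * P + Q) ^ 2 - 3 * (4 * m - 1) * Q ^ 2) := by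
    rw [hx, ← hre, ← him]; ring
  have h4w : 4 * w = Q * (3 * (2 * P + Q) ^ 2 - (4 * m - 1) * Q ^ 2) := by
    rw [← him]; ring
  have hQ : Odd Q := by
    rw [← Int.not_even_iff_odd]
    rintro ⟨q, hq⟩
    apply hxodd
    rw [hq] at h4x
    exact ⟨(P + q) * ((P + q) ^ 2 - 3 * (4 * m - 1) * q ^ 2), by linarith⟩
  have hu : Odd (2 * P + Q) := (even_two_mul P).add_odd hQ
  refine ⟨2 * P + Q, Q, hu, hQ, ?_, ?_, h4x, h4w, by rw [← hz]; ring⟩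
  · by_contra hne
    obtain ⟨p, hpp, hpd⟩ := Nat.exists_prime_and_dvd hne
    have hpz := Nat.prime_iff_prime_int.mp hpp
    have hpg : (p : ℤ) ∣ (Int.gcd (2 * P + Q) Q : ℤ) := by exact_mod_cast hpd
    have hpu : (p : ℤ) ∣ 2 * P + Q := hpg.trans (Int.gcd_dvd_left ..)
    have hpv : (p : ℤ) ∣ Q := hpg.trans (Int.gcd_dvd_right ..)
    have hp4 : ¬ (p : ℤ) ∣ 4 := by
      intro h
      have h2 : (p : ℤ) ∣ 2 := hpz.dvd_of_dvd_pow (n := 2) (by norm_num; exact h)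
      have h2' : p ∣ 2 := by exact_mod_cast h2
      have : p = 2 := (Nat.prime_dvd_prime_iff_eq hpp Nat.prime_two).mp h2'
      rw [this] at hpv
      rw [← Int.not_even_iff_odd] at hQ
      exact hQ (even_iff_two_dvd.mpr (by exact_mod_cast hpv))
    have h1 : (p : ℤ) ∣ x :=
      (hpz.dvd_or_dvd (h4x ▸ hpu.mul_right _ : (p : ℤ) ∣ 4 * x)).resolve_left hp4
    have h2 : (p : ℤ) ∣ w :=
      (hpz.dvd_or_dvd (h4w ▸ hpv.mul_right _ : (p : ℤ) ∣ 4 * w)).resolve_left hp4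
    exact hpz.not_isUnit (hxw.isUnit_of_dvd' h1 h2)
  · apply mul_ne_zero
    · rintro h; rw [h] at hu; exact absurd hu (by decide)
    · rintro h; rw [h] at hQ; exact absurd hQ (by decide)

theorem factorization_x2_ay2n_4z3
    (a : ℤ) (ha : a ∈ ({7, 11, 19, 43, 67, 163} : Set ℤ))
    (n : ℕ) (hn : 0 < n)
    (x y z : ℤ) (hgcd : Int.gcd x y = 1)
    (heq : x ^ 2 + a * y ^ (2 * n) = 4 * z ^ 3) :
    ∃ u v : ℤ, Odd u ∧ Odd v ∧ Int.gcd u v = 1 ∧ u * v ≠ 0 ∧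
      4 * x = u * (u ^ 2 - 3 * a * v ^ 2) ∧
      4 * y ^ n = v * (3 * u ^ 2 - a * v ^ 2) ∧
      4 * z = u ^ 2 + a * v ^ 2 := by
  obtain ⟨m, hm, rfl, hp⟩ : ∃ m : ℤ, (m = 2 ∨ m = 3 ∨ m = 5 ∨ m = 11 ∨ m = 17 ∨ m = 41) ∧
      a = 4 * m - 1 ∧ Prime a := by
    simp only [Set.mem_insert_iff, Set.mem_singleton_iff] at ha
    rcases ha with rfl | rfl | rfl | rfl | rfl | rfl
    · exact ⟨2, by norm_num, by norm_num, Int.prime_iff_natAbs_prime.mpr (by norm_num)⟩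
    · exact ⟨3, by norm_num, by norm_num, Int.prime_iff_natAbs_prime.mpr (by norm_num)⟩
    · exact ⟨5, by norm_num, by norm_num, Int.prime_iff_natAbs_prime.mpr (by norm_num)⟩
    · exact ⟨11, by norm_num, by norm_num, Int.prime_iff_natAbs_prime.mpr (by norm_num)⟩
    · exact ⟨17, by norm_num, by norm_num, Int.prime_iff_natAbs_prime.mpr (by norm_num)⟩
    · exact ⟨41, by norm_num, by norm_num, Int.prime_iff_natAbs_prime.mpr (by norm_num)⟩
  have := aux_all m hm
  refine aux_main m (by omega) hp x (y ^ n) z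
    (Int.isCoprime_iff_gcd_eq_one.mpr hgcd).pow_right ?_
  rw [← heq]; ring
end

section
/- Let a ∈ {11, 19, 43, 67, 163} and let n be a positive integer. Then there are no integers x, y, z with gcd(x,y) = 1 satisfying a·x^2 + y^{2n} = 4z^3, and there are no integers x, y, z with gcd(x,y) = 1 satisfying x^2 + a·y^{2n} = 4z^3. -/
/-- Every positive form of discriminant `-a` represents `1` (class number one). -/
theorem form_represents_one (a : ℤ) (ha : a = 11 ∨ a = 19 ∨ a = 43 ∨ a = 67 ∨ a = 163) (N : ℕ) :
    ∀ A B C : ℤ, 0 < A → A.toNat ≤ N → 4 * A * C - B ^ 2 = a →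
      ∃ m l : ℤ, A * m ^ 2 + B * m * l + C * l ^ 2 = 1 := by
  induction N with
  | zero => intro A B C hA hN; omega
  | succ N ih =>
    intro A B C hA hN h
    obtain ⟨r, B', hB', h1, h2⟩ : ∃ r B' : ℤ, B' = B + 2 * A * r ∧ -A ≤ B' ∧ B' ≤ A := by
      refine ⟨-((B + A) / (2 * A)), (B + A) % (2 * A) - A, ?_, ?_, ?_⟩
      · have := Int.emod_add_mul_ediv (B + A) (2 * A)
        linarith
      · have := Int.emod_nonneg (B + A) (show 2 * A ≠ 0 by omega)
        linarith
      · have := Int.emod_lt_of_pos (B + A) (show 0 < 2 * A by omega)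
        linarith
    obtain ⟨C', hC'⟩ : ∃ C' : ℤ, C' = A * r ^ 2 + B * r + C := ⟨_, rfl⟩
    have hd : 4 * A * C' - B' ^ 2 = a := by rw [hB', hC', ← h]; ring
    have hapos : 0 < a := by omega
    have hC'pos : 0 < C' := by
      by_contra hc
      nlinarith [sq_nonneg B', mul_nonneg hA.le (show 0 ≤ -C' by omega)]
    suffices ∃ m l : ℤ, A * m ^ 2 + B' * m * l + C' * l ^ 2 = 1 by
      obtain ⟨m, l, hml⟩ := this
      refine ⟨m + r * l, l, ?_⟩
      rw [← hml, hB', hC']; ring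
    by_cases hlt : C' < A
    · obtain ⟨m, l, hml⟩ := ih C' B' A hC'pos (by omega) (by rw [← hd]; ring)
      exact ⟨l, m, by rw [← hml]; ring⟩
    · have hA1 : 3 * A ^ 2 ≤ a := by nlinarith
      have hA7 : A ≤ 7 := by
        have : a ≤ 163 := by omega
        nlinarith
      have : A = 1 := by
        by_contra hne
        have hA2 : 2 ≤ A := by omega
        clear ih hN h hB' hC' hC'pos hA hne
        interval_cases A <;> interval_cases B' <;> omega
      exact ⟨1, 0, by rw [this]; ring⟩

theorem parity_contra (x m z l k t : ℤ) (hxo : Odd x) (hzo : Odd z) (hko : Odd k) (hto : Odd t)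
    (hml : ¬ (Even m ∧ Even l))
    (hev : Even (x * (m ^ 3 - 3 * m * z * l ^ 2 * k - l ^ 3 * k * t))) : False := by
  have h3 : ¬ Even (3 : ℤ) := by decide
  rw [← Int.not_even_iff_odd] at hxo hzo hko hto
  simp only [Int.even_mul, Int.even_sub, Int.even_pow, hxo, hzo, hko, hto, h3] at hev
  by_cases hm : Even m <;> by_cases hl : Even l <;> simp_all

set_option maxHeartbeats 4000000 in
theorem core_equation (a : ℤ) (ha : a = 11 ∨ a = 19 ∨ a = 43 ∨ a = 67 ∨ a = 163)
    (x y z : ℤ) (hxy : IsCoprime x y) (h : a * x ^ 2 + y ^ 2 = 4 * z ^ 3) : False := by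
  obtain ⟨s, hs⟩ : ∃ s : ℤ, a = 8 * s + 3 := ⟨a / 8, by omega⟩
  have hsq : ∀ w : ℤ, Odd w → ∃ r : ℤ, w ^ 2 = 8 * r + 1 := by
    rintro w ⟨p, rfl⟩
    obtain ⟨r, hr⟩ := Int.even_mul_succ_self p
    exact ⟨r, by linear_combination 4 * hr⟩
  have hao : Odd a := ⟨4 * s + 1, by omega⟩
  have hpar : Even (a * x ^ 2 + y ^ 2) := ⟨2 * z ^ 3, by rw [h]; ring⟩
  have hnot : ¬ (Even x ∧ Even y) := by
    rintro ⟨⟨p, hp⟩, ⟨q, hq⟩⟩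
    obtain ⟨u, v, huv⟩ := hxy
    have : 2 * (u * p + v * q) = 1 := by rw [← huv, hp, hq]; ring
    omega
  have hodd : Odd x ∧ Odd y := by
    rw [← Int.not_even_iff_odd, ← Int.not_even_iff_odd]
    rw [← Int.not_even_iff_odd] at hao
    simp only [Int.even_add, Int.even_mul, Int.even_pow] at hpar
    tauto
  obtain ⟨hxo, hyo⟩ := hodd
  obtain ⟨r1, hr1⟩ := hsq x hxo
  obtain ⟨r2, hr2⟩ := hsq y hyo
  have hz3 : z ^ 3 = 2 * (8 * s * r1 + s + 3 * r1 + r2) + 1 := by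
    have : 4 * z ^ 3 = (8 * s + 3) * (8 * r1 + 1) + (8 * r2 + 1) := by
      rw [← h, hs, hr1, hr2]
    linarith
  have hz3o : Odd (z ^ 3) := ⟨_, hz3⟩
  have hzo : Odd z := (Int.odd_pow.1 hz3o).resolve_right (by norm_num)
  have hapos : 0 < a := by omega
  have hxne : x ≠ 0 := by rintro rfl; simp at hxo
  have hx2 : 0 < x ^ 2 := by positivity
  have hzpos : 0 < z := by
    by_contra hc
    have : z ^ 3 ≤ 0 := by
      have : 0 ≤ (-z) ^ 3 := pow_nonneg (by omega) 3
      nlinarith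
    nlinarith [sq_nonneg y, mul_pos hapos hx2]
  -- x is coprime to 4 z ^ 3
  have hcop : IsCoprime x (4 * z ^ 3) := by
    rw [← h]
    have h1 : IsCoprime x (y ^ 2) := hxy.pow_right
    have := h1.add_mul_left_right (a * x)
    have e : a * x ^ 2 + y ^ 2 = y ^ 2 + x * (a * x) := by ring
    rw [e]; exact this
  obtain ⟨u, v, huv⟩ := hcop
  -- t = u * y
  have hdvd : 4 * z ^ 3 ∣ (u * y) ^ 2 + a := by
    have hc : IsCoprime (4 * z ^ 3) (x ^ 2) := IsCoprime.pow_right ⟨v, u, by linarith⟩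
    refine hc.dvd_of_dvd_mul_left ⟨1 + y ^ 2 * (v ^ 2 * (4 * z ^ 3) - 2 * v), ?_⟩
    have hux : u * x = 1 - v * (4 * z ^ 3) := by linarith
    have : x ^ 2 * ((u * y) ^ 2 + a) = (u * x) ^ 2 * y ^ 2 + a * x ^ 2 := by ring
    rw [this, hux]
    linear_combination h
  obtain ⟨k, hk⟩ := hdvd
  obtain ⟨t, ht⟩ : ∃ t, t = u * y := ⟨_, rfl⟩
  obtain ⟨j, hj⟩ : ∃ j, j = v * y := ⟨_, rfl⟩
  rw [← ht] at hk
  have hyj : y = x * t + 4 * z ^ 3 * j := by rw [ht, hj]; linear_combination (-y) * huv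
  have hto : Odd t := by
    rw [← Int.not_even_iff_odd]
    rintro ⟨p, hp⟩
    obtain ⟨q, hq⟩ := hyo
    have : 2 * (x * p + 2 * z ^ 3 * j) = 2 * q + 1 := by rw [← hq, hyj, hp]; ring
    omega
  have hko : Odd k := by
    obtain ⟨r, hr⟩ := hsq t hto
    have hzk : Odd (z ^ 3 * k) := by
      refine ⟨r + s, ?_⟩
      linarith
    exact (Int.odd_mul.1 hzk).2
  have hkpos : 0 < k := by
    by_contra hc
    have : 0 < z ^ 3 := by positivity
    nlinarith [sq_nonneg t]
  obtain ⟨m, l, hF⟩ := form_represents_one a ha z.toNat z t (z ^ 2 * k) hzpos le_rfl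
    (by linear_combination -hk)
  have hN : 4 * z ^ 3 * j ^ 2 + 2 * j * x * t + k * x ^ 2 = 1 := by
    have h4 : (4 * z ^ 3) ≠ 0 := by positivity
    apply mul_left_cancel₀ h4
    rw [hyj] at h
    linear_combination h - x ^ 2 * hk
  obtain ⟨b0, hb0⟩ : ∃ b0, b0 = m * z + l * t := ⟨_, rfl⟩
  obtain ⟨e0, he0⟩ : ∃ e0, e0 = b0 ^ 2 - l ^ 2 * (z ^ 3 * k) := ⟨_, rfl⟩
  obtain ⟨e1, he1⟩ : ∃ e1, e1 = -2 * b0 * l + l ^ 2 * t := ⟨_, rfl⟩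
  obtain ⟨P1, hP1⟩ : ∃ P1, P1 = e0 * b0 + e1 * l * (z ^ 3 * k) := ⟨_, rfl⟩
  obtain ⟨P2, hP2⟩ : ∃ P2, P2 = -e0 * l + e1 * b0 - e1 * l * t := ⟨_, rfl⟩
  obtain ⟨d1, hd1⟩ : ∃ d1, d1 = x * (3 * m ^ 2 * z ^ 2 * l * k + 3 * m * z * l ^ 2 * k * t
    + l ^ 3 * k * t ^ 2 - l ^ 3 * k ^ 2 * z ^ 3) + 2 * j * P1 := ⟨_, rfl⟩
  obtain ⟨d2, hd2⟩ : ∃ d2, d2 = x * (m ^ 3 - 3 * m * z * l ^ 2 * k - l ^ 3 * k * t)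
    + 2 * j * P2 := ⟨_, rfl⟩
  have hD : d1 ^ 2 + t * d1 * d2 + z ^ 3 * k * d2 ^ 2 = 1 := by
    have : d1 ^ 2 + t * d1 * d2 + z ^ 3 * k * d2 ^ 2
        = (z * m ^ 2 + t * m * l + z ^ 2 * k * l ^ 2) ^ 3
          * (4 * z ^ 3 * j ^ 2 + 2 * j * x * t + k * x ^ 2) := by
      rw [hd1, hd2, hP1, hP2, he1, he0, hb0]; ring
    rw [this, hF, hN]; norm_num
  have hD' : (2 * d1 + t * d2) ^ 2 + a * d2 ^ 2 = 4 := by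
    linear_combination 4 * hD + d2 ^ 2 * hk
  have hd20 : d2 = 0 := by
    by_contra hne
    have : 0 < d2 ^ 2 := by positivity
    have : 11 ≤ a := by omega
    nlinarith [sq_nonneg (2 * d1 + t * d2)]
  have hml : ¬ (Even m ∧ Even l) := by
    rintro ⟨⟨p, hp⟩, ⟨q, hq⟩⟩
    have : 2 * (2 * (z * p ^ 2 + t * p * q + z ^ 2 * k * q ^ 2)) = 1 := by
      rw [← hF, hp, hq]; ring
    omega
  have hev : Even (x * (m ^ 3 - 3 * m * z * l ^ 2 * k - l ^ 3 * k * t)) :=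
    ⟨-(j * P2), by linarith⟩
  exact parity_contra x m z l k t hxo hzo hko hto hml hev

theorem no_solutions_for_a_in_11_19_43_67_163
    (a : ℤ) (ha : a ∈ ({11, 19, 43, 67, 163} : Set ℤ))
    (n : ℕ) (hn : 0 < n) :
    (¬ ∃ x y z : ℤ, Int.gcd x y = 1 ∧ a * x ^ 2 + y ^ (2 * n) = 4 * z ^ 3) ∧
    (¬ ∃ x y z : ℤ, Int.gcd x y = 1 ∧ x ^ 2 + a * y ^ (2 * n) = 4 * z ^ 3) := by
  simp only [Set.mem_insert_iff, Set.mem_singleton_iff] at ha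
  constructor
  · rintro ⟨x, y, z, hg, h⟩
    refine core_equation a ha x (y ^ n) z (Int.isCoprime_iff_gcd_eq_one.2 hg).pow_right ?_
    rw [← h]; ring
  · rintro ⟨x, y, z, hg, h⟩
    refine core_equation a ha (y ^ n) x z (Int.isCoprime_iff_gcd_eq_one.2 hg).symm.pow_left ?_
    rw [← h]; ring
end

section
/- There are no integers x, y, z with gcd(x,y) = 1 satisfying 7x^2 + y^8 = 4z^3. -/
namespace Seven

/-- The ring of integers of `ℚ(√-7)`, generated by `ω` with `ω² = ω - 2`. -/
abbrev R7 := QuadraticAlgebra ℤ (-2) 1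

open QuadraticAlgebra

lemma norm_eq (z : R7) : z.norm = z.re ^ 2 + z.re * z.im + 2 * z.im ^ 2 := by
  rw [norm_def]; ring

lemma norm_nonneg' (z : R7) : 0 ≤ z.norm := by
  rw [norm_eq]; nlinarith [sq_nonneg (2 * z.re + z.im), sq_nonneg z.im]

lemma norm_pos' {z : R7} (hz : z ≠ 0) : 0 < z.norm := by
  rcases (norm_nonneg' z).lt_or_eq with h | h
  · exact h
  · exfalso
    apply hz
    rw [norm_eq] at h
    have him : z.im = 0 := by
      have : z.im ^ 2 ≤ 0 := by nlinarith [sq_nonneg (2 * z.re + z.im), sq_nonneg z.im]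
      exact pow_eq_zero_iff (two_ne_zero) |>.1 (le_antisymm this (sq_nonneg _))
    have hre : z.re = 0 := by
      rw [him] at h
      have : z.re ^ 2 = 0 := by linarith
      exact pow_eq_zero_iff (two_ne_zero) |>.1 this
    ext
    · simpa using hre
    · simpa using him

/-- Rounded quotient. -/
def quo (x y : R7) : R7 :=
  let N := y.norm
  let c := (x * star y).re
  let d := (x * star y).im
  let l := (2 * d + N) / (2 * N)
  let f := d - N * l
  ⟨(2 * c + f + N) / (2 * N), l⟩

lemma norm_rem_lt (x : R7) {y : R7} (hy : y ≠ 0) : (x - y * quo x y).norm < y.norm := by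
  have hN := norm_pos' hy
  have key : (x - y * quo x y).norm * y.norm
      = ((x - y * quo x y) * star y).norm := by rw [map_mul, QuadraticAlgebra.norm_star]
  have e1 : (x - y * quo x y) * star y = x * star y - algebraMap ℤ R7 y.norm * quo x y := by
    rw [algebraMap_norm_eq_mul_star]; ring
  rw [e1] at key
  set N := y.norm with hNdef
  set c := (x * star y).re with hc
  set d := (x * star y).im with hd
  set l := (2 * d + N) / (2 * N) with hl
  set k := (2 * c + (d - N * l) + N) / (2 * N) with hk
  have hq : quo x y = ⟨k, l⟩ := rfl
  have hre : (x * star y - algebraMap ℤ R7 N * quo x y).re = c - N * k := by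
    rw [hq]; simp [hc]
  have him : (x * star y - algebraMap ℤ R7 N * quo x y).im = d - N * l := by
    rw [hq]; simp [hd]
  rw [norm_eq (x * star y - _), hre, him] at key
  have h1 := Int.mul_ediv_add_emod (2 * d + N) (2 * N)
  have h2 := Int.emod_nonneg (2 * d + N) (show 2 * N ≠ 0 by omega)
  have h3 := Int.emod_lt_of_pos (2 * d + N) (show 0 < 2 * N by omega)
  have h4 := Int.mul_ediv_add_emod (2 * c + (d - N * l) + N) (2 * N)
  have h5 := Int.emod_nonneg (2 * c + (d - N * l) + N) (show 2 * N ≠ 0 by omega)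
  have h6 := Int.emod_lt_of_pos (2 * c + (d - N * l) + N) (show 0 < 2 * N by omega)
  rw [← hl] at h1
  rw [← hk] at h4
  generalize (2 * d + N) % (2 * N) = r1 at *
  generalize (2 * c + (d - N * l) + N) % (2 * N) = r2 at *
  set f := d - N * l with hf
  set e := c - N * k with he
  have f1 : 2 * f = r1 - N := by rw [hf]; linarith
  have f2 : 2 * e + f = r2 - N := by rw [he]; linarith
  have g1 : (2 * f) ^ 2 ≤ N ^ 2 := by
    rw [f1]; apply sq_le_sq'  <;> linarith
  have g2 : (2 * e + f) ^ 2 ≤ N ^ 2 := by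
    rw [f2]; apply sq_le_sq'  <;> linarith
  have : (x - y * quo x y).norm * N < N * N := by
    rw [key]; nlinarith
  exact lt_of_mul_lt_mul_right this hN.le

noncomputable instance : EuclideanDomain R7 :=
  { (inferInstance : CommRing R7), (inferInstance : Nontrivial R7) with
    quotient := quo
    remainder := fun x y => x - y * quo x y
    quotient_zero := by
      intro a
      ext <;> simp [quo]
    quotient_mul_add_remainder_eq := fun a b => by ring
    r := fun a b => a.norm.natAbs < b.norm.natAbs
    r_wellFounded := (measure (fun z : R7 => z.norm.natAbs)).wf
    remainder_lt := fun a b hb => by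
      have h1 := norm_rem_lt a hb
      have h2 := norm_nonneg' (a - b * quo a b)
      show (a - b * quo a b).norm.natAbs < b.norm.natAbs
      omega
    mul_left_not_lt := fun a b hb => by
      have h1 := norm_pos' hb
      have h2 := norm_nonneg' a
      have h3 : a.norm ≤ (a * b).norm := by rw [map_mul]; nlinarith
      show ¬ ((a * b).norm.natAbs < a.norm.natAbs)
      omega }

lemma unit_eq {z : R7} (hz : IsUnit z) : z = 1 ∨ z = -1 := by
  rw [isUnit_iff_norm_isUnit, Int.isUnit_iff] at hz
  have h0 := norm_nonneg' z
  have h1 : z.norm = 1 := by omega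
  rw [norm_eq] at h1
  have him : z.im = 0 := by
    have h : z.im ^ 2 < 1 := by nlinarith [sq_nonneg (2 * z.re + z.im)]
    have : z.im ^ 2 = 0 := by nlinarith [sq_nonneg z.im]
    exact pow_eq_zero_iff (two_ne_zero) |>.1 this
  rw [him] at h1
  have h2 : z.re ^ 2 = 1 := by linarith
  rcases (by simpa using h2 : z.re = 1 ∨ z.re = -1) with h | h
  · left; ext <;> simp [h, him]
  · right; ext <;> simp [h, him]


lemma cube_descent {x y z : ℤ} (hxy : IsCoprime x y) (h7 : IsCoprime 7 y) (hx : x % 2 = 1)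
    (hy : y % 2 = 1) (h : 7 * x ^ 2 + y ^ 8 = 4 * z ^ 3) :
    ∃ r s : ℤ, 4 * y ^ 4 = (2 * r + s) * ((2 * r + s) ^ 2 - 21 * s ^ 2) ∧
      4 * x = s * (3 * (2 * r + s) ^ 2 - 7 * s ^ 2) := by
  have hev : (y ^ 4 - x) % 2 = 0 := by
    have : y ^ 4 % 2 = 1 := Int.odd_iff.1 ((Int.odd_iff.2 hy).pow)
    omega
  obtain ⟨c, hc⟩ : ∃ c, y ^ 4 - x = 2 * c := ⟨(y ^ 4 - x) / 2, by omega⟩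
  have hx' : x = y ^ 4 - 2 * c := by linarith
  have hz3 : z ^ 3 = c ^ 2 + c * x + 2 * x ^ 2 := by
    have : y ^ 4 = x + 2 * c := by linarith
    have h8 : y ^ 8 = (x + 2 * c) ^ 2 := by rw [← this]; ring
    rw [h8] at h; linarith
  let α : R7 := ⟨c, x⟩
  let β : R7 := ⟨c + x, -x⟩
  have hprod : α * β = (z : R7) ^ 3 := by
    have : (z : R7) ^ 3 = ((z ^ 3 : ℤ) : R7) := by push_cast; rfl
    rw [this, hz3]
    ext
    · simp [α, β, -Int.cast_pow, -Int.cast_add, -Int.cast_mul]; ring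
    · simp [α, β, -Int.cast_pow, -Int.cast_add, -Int.cast_mul]; ring
  have hsum : α + β = ((y ^ 4 : ℤ) : R7) := by
    have : y ^ 4 = x + 2 * c := by linarith
    rw [this]
    ext
    · rw [QuadraticAlgebra.re_intCast]; simp [α, β]; ring
    · rw [QuadraticAlgebra.im_intCast]; simp [α, β]
  have hdiff : (α - β) * (β - α) = ((7 * x ^ 2 : ℤ) : R7) := by
    ext
    · simp [α, β, -Int.cast_pow, -Int.cast_add, -Int.cast_mul]; ring
    · simp [α, β, -Int.cast_pow, -Int.cast_add, -Int.cast_mul]; ring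
  have hco : IsCoprime (7 * x ^ 2) (y ^ 4) :=
    IsCoprime.mul_left (h7.pow_right) (hxy.pow)
  have hcop : IsCoprime α β := by
    obtain ⟨s, t, hst⟩ := hco
    have e : ((s : ℤ) : R7) * ((7 * x ^ 2 : ℤ) : R7) + ((t : ℤ) : R7) * ((y ^ 4 : ℤ) : R7) = 1 := by
      rw [← Int.cast_mul, ← Int.cast_mul, ← Int.cast_add, hst, Int.cast_one]
    rw [← hsum, ← hdiff] at e
    refine ⟨(s : R7) * (β - α) + t, -(s : R7) * (β - α) + t, ?_⟩
    rw [← e]; ring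
  obtain ⟨δ, u, hu⟩ := exists_associated_pow_of_mul_eq_pow' hcop hprod
  have : ∃ γ : R7, α = γ ^ 3 := by
    rcases unit_eq u.isUnit with h | h
    · exact ⟨δ, by rw [← hu, h, mul_one]⟩
    · exact ⟨-δ, by rw [← hu, h]; ring⟩
  obtain ⟨γ, hγ⟩ := this
  have hre : c = γ.re ^ 3 - 6 * γ.re * γ.im ^ 2 - 2 * γ.im ^ 3 := by
    have := congrArg QuadraticAlgebra.re hγ
    simp only [α, pow_succ, pow_zero, one_mul, QuadraticAlgebra.re_mul,
      QuadraticAlgebra.im_mul] at this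
    rw [this]; ring
  have him : x = 3 * γ.re ^ 2 * γ.im + 3 * γ.re * γ.im ^ 2 - γ.im ^ 3 := by
    have := congrArg QuadraticAlgebra.im hγ
    simp only [α, pow_succ, pow_zero, one_mul, QuadraticAlgebra.re_mul,
      QuadraticAlgebra.im_mul] at this
    rw [this]; ring
  refine ⟨γ.re, γ.im, ?_, ?_⟩
  · have : y ^ 4 = x + 2 * c := by linarith
    rw [this]
    rw [hre, him]; ring
  · rw [him]; ring

lemma pow_split {g h c : ℤ} {k : ℕ} (hk : Even k) (hc : c ≠ 0) (hgh : IsCoprime g h)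
    (e : g * h = c ^ k) :
    ∃ m n s : ℤ, (s = 1 ∨ s = -1) ∧ g = s * m ^ k ∧ h = s * n ^ k := by
  obtain ⟨m, hm⟩ := exists_associated_pow_of_mul_eq_pow' hgh e
  obtain ⟨n, hn⟩ := exists_associated_pow_of_mul_eq_pow' hgh.symm (mul_comm g h ▸ e)
  rw [Int.associated_iff] at hm hn
  have hpos : 0 < g * h := by rw [e]; exact hk.pow_pos hc
  have hm0 : 0 ≤ m ^ k := hk.pow_nonneg m
  have hn0 : 0 ≤ n ^ k := hk.pow_nonneg n
  rcases hm with hm | hm <;> rcases hn with hn | hn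
  · exact ⟨m, n, 1, Or.inl rfl, by linarith, by linarith⟩
  · exfalso; rw [← hm, show h = - n ^ k by linarith] at hpos; nlinarith
  · exfalso; rw [← hn, show g = - m ^ k by linarith] at hpos; nlinarith
  · exact ⟨m, n, -1, Or.inr rfl, by linarith, by linarith⟩

lemma sq_split {g h c : ℤ} (hc : c ≠ 0) (hgh : IsCoprime g h)
    (e : g * h = c ^ 2) :
    ∃ m n s : ℤ, (s = 1 ∨ s = -1) ∧ g = s * m ^ 2 ∧ h = s * n ^ 2 ∧ c = m * n := by
  obtain ⟨m, n, s, hs, h1, h2⟩ := pow_split even_two hc hgh e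
  have : c ^ 2 = (m * n) ^ 2 := by
    rw [← e, h1, h2]; rcases hs with rfl | rfl <;> ring
  rcases sq_eq_sq_iff_eq_or_eq_neg.1 this with h | h
  · exact ⟨m, n, s, hs, h1, h2, h⟩
  · exact ⟨m, -n, s, hs, h1, by rw [h2]; ring, by rw [h]; ring⟩

lemma prime_sq_split {p g h c : ℤ} (hp : Prime p) (hc : c ≠ 0) (hgh : IsCoprime g h)
    (e : g * h = p * c ^ 2) :
    ∃ m n s : ℤ, (s = 1 ∨ s = -1) ∧ c = m * n ∧
      ((g = s * m ^ 2 ∧ h = p * (s * n ^ 2)) ∨ (h = s * m ^ 2 ∧ g = p * (s * n ^ 2))) := by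
  have hd : p ∣ g * h := ⟨_, e⟩
  rcases hp.dvd_or_dvd hd with ⟨t, ht⟩ | ⟨t, ht⟩
  · have e' : h * t = c ^ 2 := by
      apply mul_left_cancel₀ hp.ne_zero; rw [← e, ht]; ring
    have hco : IsCoprime h t := by rw [ht] at hgh; exact hgh.symm.of_mul_right_right
    obtain ⟨m, n, s, hs, h1, h2, h3⟩ := sq_split hc hco e'
    exact ⟨m, n, s, hs, h3, Or.inr ⟨h1, by rw [ht, h2]⟩⟩
  · have e' : g * t = c ^ 2 := by
      apply mul_left_cancel₀ hp.ne_zero; rw [← e, ht]; ring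
    have hco : IsCoprime g t := by rw [ht] at hgh; exact hgh.of_mul_right_right
    obtain ⟨m, n, s, hs, h1, h2, h3⟩ := sq_split hc hco e'
    exact ⟨m, n, s, hs, h3, Or.inl ⟨h1, by rw [ht, h2]⟩⟩

lemma sq_mod3 {a : ℤ} (h : a % 3 ≠ 0) : a ^ 2 % 3 = 1 := by
  have : a % 3 = 1 ∨ a % 3 = 2 := by omega
  rcases this with h | h <;> simp [pow_two, Int.mul_emod, h]

lemma sq_mod3' (a : ℤ) : a ^ 2 % 3 = 0 ∨ a ^ 2 % 3 = 1 := by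
  have : a % 3 = 0 ∨ a % 3 = 1 ∨ a % 3 = 2 := by omega
  rcases this with h | h | h <;> simp [pow_two, Int.mul_emod, h]

lemma sq_mod8 {a : ℤ} (h : a % 2 = 1) : a ^ 2 % 8 = 1 := by
  have : a % 8 = 1 ∨ a % 8 = 3 ∨ a % 8 = 5 ∨ a % 8 = 7 := by omega
  rcases this with h | h | h | h <;> simp [pow_two, Int.mul_emod, h]

lemma p3 : Prime (3 : ℤ) := Int.prime_three
lemma p7 : Prime (7 : ℤ) := by
  have : Nat.Prime 7 := by norm_num
  exact_mod_cast Nat.prime_iff_prime_int.1 this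

lemma cop_of_prime {p a : ℤ} (hp : Prime p) (h : ¬ p ∣ a) : IsCoprime p a :=
  (hp.irreducible.coprime_iff_not_dvd).2 h

/-- `v² = P² + 12 R²` with `P ≡ 1 (mod 3)`, `P` odd and coprime to `R`. -/
lemma conic {P R v : ℤ} (hR : R ≠ 0) (hv : v % 2 = 1) (hP2 : P % 2 = 1) (hP3 : P % 3 = 1)
    (hPR : IsCoprime P R) (e : v ^ 2 = P ^ 2 + 12 * R ^ 2) :
    ∃ p q : ℤ, P = p ^ 2 - 3 * q ^ 2 ∧ R = p * q := by
  obtain ⟨g, hg⟩ : ∃ g, v - P = 2 * g := ⟨(v - P) / 2, by omega⟩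
  obtain ⟨h, hh⟩ : ∃ h, v + P = 2 * h := ⟨(v + P) / 2, by omega⟩
  have hgh : g * h = 3 * R ^ 2 := by
    have : (2 * g) * (2 * h) = 12 * R ^ 2 := by rw [← hg, ← hh]; linarith
    linarith
  have hPd : P = h - g := by linarith
  have h3 : IsCoprime 3 P := cop_of_prime p3 (by omega)
  have hc : IsCoprime P (g * h) := by
    rw [hgh]; exact IsCoprime.mul_right h3.symm hPR.pow_right
  have hco : IsCoprime g h := by
    have h1 : IsCoprime P g := hc.of_mul_right_left
    have h2 : IsCoprime (P + g * 1) g := h1.add_mul_left_left 1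
    have h3 : P + g * 1 = h := by linarith
    rw [h3] at h2; exact h2.symm
  obtain ⟨m, n, s, hs, hmn, H⟩ := prime_sq_split p3 hR hco hgh
  have hm := sq_mod3' m
  rcases H with ⟨h1, h2⟩ | ⟨h1, h2⟩ <;> rcases hs with rfl | rfl
  · exfalso; omega
  · exact ⟨m, n, by linarith, hmn⟩
  · exact ⟨m, n, by linarith, hmn⟩
  · exfalso; omega

lemma caseA {a b v : ℤ} (hab : IsCoprime a b) (ha2 : a % 2 = 1) (hb0 : b ≠ 0) (hv0 : v ≠ 0)
    (ha3 : a % 3 ≠ 0) (e : a ^ 8 - 21 * v ^ 2 = 4 * b ^ 4) : False := by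
  obtain ⟨F, hF⟩ : ∃ F, F = a ^ 4 - 2 * b ^ 2 := ⟨_, rfl⟩
  obtain ⟨G, hG⟩ : ∃ G, G = a ^ 4 + 2 * b ^ 2 := ⟨_, rfl⟩
  have hFG : F * G = 21 * v ^ 2 := by rw [hF, hG]; linarith
  have hGpos : 0 < G := by rw [hG]; positivity
  have hFpos : 0 < F := by
    have : 0 < F * G := by rw [hFG]; positivity
    exact pos_of_mul_pos_left this hGpos.le
  have ha4 : a ^ 4 % 3 = 1 := by
    have := sq_mod3 ha3
    have h2 := sq_mod3 (a := a ^ 2) (by omega)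
    rw [← h2]; ring_nf
  have ha42 : a ^ 4 % 2 = 1 := Int.odd_iff.1 ((Int.odd_iff.2 ha2).pow)
  have hb : b ^ 2 % 3 = 1 := by
    rcases sq_mod3' b with h | h
    · exfalso
      have h1 : F % 3 = 1 := by omega
      have h2 : G % 3 = 1 := by omega
      have h3 : (F * G) % 3 = 1 := by rw [Int.mul_emod, h1, h2]; rfl
      omega
    · exact h
  have hF3 : F % 3 = 2 := by omega
  have hG3 : G % 3 = 0 := by omega
  have hco : IsCoprime F G := by
    have h2F : IsCoprime 2 F := cop_of_prime Int.prime_two (by omega)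
    have h1 : IsCoprime (a ^ 4) (b ^ 2) := hab.pow
    have hbF : IsCoprime F (b ^ 2) := by
      have : F = a ^ 4 + (b ^ 2) * (-2) := by rw [hF]; ring
      rw [this]; exact h1.add_mul_left_left (-2)
    have h4 : IsCoprime F (2 * (2 * b ^ 2)) := h2F.symm.mul_right (h2F.symm.mul_right hbF)
    have : G = 2 * (2 * b ^ 2) + F * 1 := by rw [hF, hG]; ring
    rw [this]; exact h4.add_mul_left_right 1
  obtain ⟨G', hG'⟩ : ∃ G', G = 3 * G' := ⟨G / 3, by omega⟩
  have hFG' : F * G' = 7 * v ^ 2 := by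
    rw [hG'] at hFG; linarith
  have hco' : IsCoprime F G' := by rw [hG'] at hco; exact hco.of_mul_right_right
  obtain ⟨m, n, s, hs, hmn, H⟩ := prime_sq_split p7 hv0 hco' hFG'
  have hm := sq_mod3' m
  have hn := sq_mod3' n
  have hm0 := sq_nonneg m
  have hn0 := sq_nonneg n
  rcases H with ⟨h1, h2⟩ | ⟨h1, h2⟩ <;> rcases hs with rfl | rfl <;> omega

set_option maxHeartbeats 1000000 in
lemma caseB {a b v : ℤ} (hab : IsCoprime a b) (ha2 : a % 2 = 1) (hb2 : b % 2 = 1)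
    (hv2 : v % 2 = 1) (hb3 : b % 3 ≠ 0)
    (e : 7 * v ^ 2 = 243 * a ^ 8 + 4 * b ^ 4) : False := by
  have ha0 : a ≠ 0 := by rintro rfl; omega
  have hb0 : b ≠ 0 := by rintro rfl; omega
  obtain ⟨X, hX⟩ : ∃ X, X = 9 * a ^ 4 := ⟨_, rfl⟩
  obtain ⟨Y, hY⟩ : ∃ Y, Y = b ^ 2 := ⟨_, rfl⟩
  have hXY : 7 * v ^ 2 = 3 * X ^ 2 + 4 * Y ^ 2 := by rw [hX, hY, e]; ring
  have hX8 : X % 8 = 1 := by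
    have := sq_mod8 (a := 3 * a ^ 2) (by
      have := sq_mod8 ha2
      omega)
    rw [hX, ← this]; ring_nf
  have hY8 : Y % 8 = 1 := by rw [hY]; exact sq_mod8 hb2
  have hY3 : Y % 3 = 1 := by rw [hY]; exact sq_mod3 hb3
  have h3b : IsCoprime 3 b := cop_of_prime p3 (by omega)
  have hXYc : IsCoprime X Y := by
    rw [hX, hY, show (9 : ℤ) = 3 ^ 2 by norm_num]
    exact IsCoprime.mul_left h3b.pow (hab.pow)
  have hdvd : (7 : ℤ) ∣ (X - Y) * (X + Y) := by
    have : (7 : ℤ) ∣ 3 * ((X - Y) * (X + Y)) := ⟨v ^ 2 - Y ^ 2, by linarith⟩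
    exact (p7.dvd_or_dvd this).resolve_left (by norm_num)
  rcases p7.dvd_or_dvd hdvd with ⟨R, hR⟩ | ⟨R, hR⟩
  · obtain ⟨P, hP⟩ : ∃ P, P = Y + 3 * R := ⟨_, rfl⟩
    have hXe : X = P + 4 * R := by linarith
    have hYe : Y = P - 3 * R := by linarith
    have hv : v ^ 2 = P ^ 2 + 12 * R ^ 2 := by
      have : 7 * v ^ 2 = 7 * (P ^ 2 + 12 * R ^ 2) := by rw [hXY, hXe, hYe]; ring
      linarith
    have hPR : IsCoprime P R := by
      obtain ⟨s, t, hst⟩ := hXYc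
      refine ⟨s + t, 4 * s - 3 * t, ?_⟩
      rw [← hst, hXe, hYe]; ring
    have hR8 : R % 8 = 0 := by omega
    have h7a : ¬ (7 : ℤ) ∣ a := by
      clear hv hXY e
      intro h
      have h1 : (7 : ℤ) ∣ X := by rw [hX]; exact (dvd_pow h (by norm_num)).mul_left _
      have h2 : (7 : ℤ) ∣ Y := (dvd_sub_right h1).1 ⟨R, hR⟩
      exact p7.not_isUnit (hXYc.isUnit_of_dvd' h1 h2)
    by_cases hR0 : R = 0
    · -- then `X = Y`, impossible modulo 3
      subst hR0
      omega
    obtain ⟨p, q, hpq, hRpq⟩ := conic hR0 hv2 (by omega) (by omega) hPR hv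
    have hp2 : p % 2 = 1 := by
      by_contra hp
      have hq2 : q % 2 = 1 := by
        by_contra hq
        obtain ⟨i, hi⟩ : ∃ i, p = 2 * i := ⟨p / 2, by omega⟩
        obtain ⟨j, hj⟩ : ∃ j, q = 2 * j := ⟨q / 2, by omega⟩
        have : P = 2 * (2 * i ^ 2 - 6 * j ^ 2) := by rw [hpq, hi, hj]; ring
        omega
      have h8q : IsCoprime 8 q := by
        have : IsCoprime 2 q := cop_of_prime Int.prime_two (by omega)
        have h := this.pow_left (m := 3)
        norm_num at h; exact h
      have h8p : (8 : ℤ) ∣ p := h8q.dvd_of_dvd_mul_right (by rw [← hRpq]; omega)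
      obtain ⟨i, rfl⟩ := h8p
      have := sq_mod8 hq2
      have h9 : P = 8 * (8 * i ^ 2) - 3 * q ^ 2 := by rw [hpq]; ring
      omega
    have h8q : (8 : ℤ) ∣ q := by
      have : IsCoprime 2 p := cop_of_prime Int.prime_two (by omega)
      have h := this.pow_left (m := 3)
      norm_num at h
      exact h.dvd_of_dvd_mul_left (by rw [← hRpq]; omega)
    obtain ⟨j, hj⟩ : ∃ j, q = 2 * j := ⟨q / 2, by omega⟩
    have ha8 := sq_mod8 ha2
    obtain ⟨g, hg⟩ : ∃ g, p + 2 * q - 3 * a ^ 2 = 2 * g :=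
      ⟨(p + 2 * q - 3 * a ^ 2) / 2, by omega⟩
    obtain ⟨h, hh⟩ : ∃ h, p + 2 * q + 3 * a ^ 2 = 2 * h :=
      ⟨(p + 2 * q + 3 * a ^ 2) / 2, by omega⟩
    have hXpq : 9 * a ^ 4 = p ^ 2 + 4 * p * q - 3 * q ^ 2 := by
      rw [← hX, hXe, hpq, hRpq]; ring
    have hgh : g * h = 7 * j ^ 2 := by
      have : (2 * g) * (2 * h) = 28 * j ^ 2 := by
        rw [← hg, ← hh]
        have : (p + 2 * q - 3 * a ^ 2) * (p + 2 * q + 3 * a ^ 2) = 7 * q ^ 2 := by linarith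
        rw [this, hj]; ring
      linarith
    have hj0 : j ≠ 0 := by
      rintro rfl
      apply hR0; rw [hRpq, hj]; ring
    have hXq : IsCoprime X q := by
      have h1 : IsCoprime X R := by
        rw [hXe]
        have := hPR.add_mul_left_left 4
        rwa [mul_comm R 4] at this
      rw [hRpq] at h1
      exact h1.of_mul_right_right
    have haj : IsCoprime (3 * a ^ 2) j := by
      have h1 : IsCoprime X j := by rw [hj] at hXq; exact hXq.of_mul_right_right
      have h2 : X = (3 * a ^ 2) * (3 * a ^ 2) := by rw [hX]; ring
      rw [h2] at h1; exact h1.of_mul_left_left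
    have ha7 : IsCoprime (3 * a ^ 2) 7 := by
      apply IsCoprime.symm
      apply cop_of_prime p7
      intro hd
      rcases p7.dvd_or_dvd hd with hd | hd
      · norm_num at hd
      · exact h7a (p7.dvd_of_dvd_pow hd)
    have hd : h = 3 * a ^ 2 + g * 1 := by linarith
    have hco : IsCoprime g h := by
      have h1 : IsCoprime (3 * a ^ 2) (g * h) := by
        rw [hgh]; exact ha7.mul_right haj.pow_right
      have h2 := h1.of_mul_right_left.add_mul_left_left 1
      rw [← hd] at h2; exact h2.symm
    obtain ⟨m, n, s, hs, hmn, H⟩ := prime_sq_split p7 hj0 hco hgh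
    have ha7' : a % 7 ≠ 0 := by omega
    have key : ∀ a m : ZMod 7, a ≠ 0 → 3 * a ^ 2 ≠ m ^ 2 := by decide
    have key' : ∀ w : ℤ, 3 * a ^ 2 ≠ m ^ 2 - 7 * w := by
      intro w hw
      have := congrArg (Int.cast : ℤ → ZMod 7) hw
      push_cast at this
      rw [show (7 : ZMod 7) = 0 from rfl, zero_mul, sub_zero] at this
      refine key a m ?_ this
      rw [Ne, ZMod.intCast_zmod_eq_zero_iff_dvd]
      exact_mod_cast h7a
    have hfin : 3 * a ^ 2 = 7 * n ^ 2 - m ^ 2 := by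
      rcases H with ⟨h1, h2⟩ | ⟨h1, h2⟩ <;> rcases hs with rfl | rfl
      · linarith
      · exact absurd (by linarith) (key' (n ^ 2))
      · exact absurd (by linarith) (key' (n ^ 2))
      · linarith
    have h4 : (m * n) % 4 = 0 := by omega
    have key8 : ∀ m n : ZMod 8, 3 = 7 * n ^ 2 - m ^ 2 → 2 * (m * n) ≠ 0 := by decide
    apply key8 m n
    · have h5 : (3 * a ^ 2) % 8 = 3 := by omega
      have := congrArg (Int.cast : ℤ → ZMod 8) hfin
      push_cast at this
      rw [← this]
      have h6 : (((a ^ 2 : ℤ)) : ZMod 8) = ((1 : ℤ) : ZMod 8) := by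
        rw [ZMod.intCast_eq_intCast_iff]; exact ha8
      push_cast at h6
      rw [h6]; ring
    · have : ((2 * (m * n) : ℤ) : ZMod 8) = 0 := by
        rw [ZMod.intCast_zmod_eq_zero_iff_dvd]; push_cast; omega
      exact_mod_cast this
  · obtain ⟨P, hP⟩ : ∃ P, P = Y - 3 * R := ⟨_, rfl⟩
    have hXe : X = 4 * R - P := by linarith
    have hYe : Y = P + 3 * R := by linarith
    have hv : v ^ 2 = P ^ 2 + 12 * R ^ 2 := by
      have : 7 * v ^ 2 = 7 * (P ^ 2 + 12 * R ^ 2) := by rw [hXY, hXe, hYe]; ring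
      linarith
    have hPR : IsCoprime P R := by
      obtain ⟨s, t, hst⟩ := hXYc
      refine ⟨-s + t, 4 * s + 3 * t, ?_⟩
      rw [← hst, hXe, hYe]; ring
    have hR0 : R ≠ 0 := by rintro rfl; omega
    obtain ⟨p, q, hpq, hRpq⟩ := conic hR0 hv2 (by omega) (by omega) hPR hv
    have hP8 : P % 8 = 7 := by omega
    have key8 : ∀ p q : ZMod 8, p ^ 2 - 3 * q ^ 2 ≠ 7 := by decide
    apply key8 p q
    have := congrArg (Int.cast : ℤ → ZMod 8) hpq
    push_cast at this
    rw [← this]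
    have h6 : ((P : ℤ) : ZMod 8) = ((7 : ℤ) : ZMod 8) := by
      rw [ZMod.intCast_eq_intCast_iff]; exact hP8
    rw [h6]; rfl

end Seven

open Seven in
theorem no_primitive_solutions_7x2_y8_4z3 :
    ¬ ∃ x y z : ℤ, Int.gcd x y = 1 ∧ 7 * x ^ 2 + y ^ 8 = 4 * z ^ 3 := by
  rintro ⟨x, y, z, hg, e⟩
  have hxy : IsCoprime x y := Int.isCoprime_iff_gcd_eq_one.2 hg
  -- parity
  have hpar : x % 2 = 1 ∧ y % 2 = 1 := by
    rcases Int.emod_two_eq_zero_or_one x with hx | hx <;>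
      rcases Int.emod_two_eq_zero_or_one y with hy | hy
    · exact absurd (hxy.isUnit_of_dvd' (Int.dvd_of_emod_eq_zero hx) (Int.dvd_of_emod_eq_zero hy))
        Int.prime_two.not_isUnit
    · exfalso
      have h1 : y ^ 8 % 2 = 1 := Int.odd_iff.1 ((Int.odd_iff.2 hy).pow)
      obtain ⟨t, rfl⟩ := Int.dvd_of_emod_eq_zero hx
      have : 7 * (2 * t) ^ 2 = 2 * (14 * t ^ 2) := by ring
      omega
    · exfalso
      have h1 := sq_mod8 hx
      obtain ⟨t, rfl⟩ := Int.dvd_of_emod_eq_zero hy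
      have : (2 * t) ^ 8 = 2 * (128 * t ^ 8) := by ring
      omega
    · exact ⟨hx, hy⟩
  obtain ⟨hx2, hy2⟩ := hpar
  have hy0 : y ≠ 0 := by rintro rfl; omega
  have h7y : ¬ (7 : ℤ) ∣ y := by
    rintro ⟨t, rfl⟩
    have h1 : (7 : ℤ) ∣ 4 * z ^ 3 := ⟨x ^ 2 + 7 ^ 7 * t ^ 8, by rw [← e]; ring⟩
    have h2 : (7 : ℤ) ∣ z := by
      rcases p7.dvd_or_dvd h1 with h | h
      · norm_num at h
      · exact p7.dvd_of_dvd_pow h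
    obtain ⟨w, rfl⟩ := h2
    have h3 : (7 : ℤ) ∣ x ^ 2 := ⟨28 * w ^ 3 - 7 ^ 6 * t ^ 8, by
      have : 7 * x ^ 2 = 7 * (7 * (28 * w ^ 3 - 7 ^ 6 * t ^ 8)) := by
        linear_combination e
      linarith⟩
    exact p7.not_isUnit (hxy.isUnit_of_dvd' (p7.dvd_of_dvd_pow h3) (dvd_mul_right _ _))
  obtain ⟨r, v, hY, hX⟩ := cube_descent hxy (cop_of_prime p7 h7y) hx2 hy2 e
  obtain ⟨u, hu⟩ : ∃ u, u = 2 * r + v := ⟨_, rfl⟩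
  rw [← hu] at hY hX
  have hy42 : y ^ 4 % 2 = 1 := Int.odd_iff.1 ((Int.odd_iff.2 hy2).pow)
  have hv2 : v % 2 = 1 := by
    by_contra hv
    obtain ⟨t, ht⟩ : ∃ t, v = 2 * t := ⟨v / 2, by omega⟩
    obtain ⟨s, hs⟩ : ∃ s, u = 2 * s := ⟨u / 2, by omega⟩
    have : 4 * y ^ 4 = 4 * (2 * (s * (s ^ 2 - 21 * t ^ 2))) := by rw [hY, hs, ht]; ring
    omega
  have hu2 : u % 2 = 1 := by omega
  have hu8 := sq_mod8 hu2
  have hv8 := sq_mod8 hv2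
  have hv0 : v ≠ 0 := by rintro rfl; omega
  obtain ⟨w, hw⟩ : ∃ w, u ^ 2 - 21 * v ^ 2 = 4 * w := ⟨(u ^ 2 - 21 * v ^ 2) / 4, by omega⟩
  obtain ⟨w', hw'⟩ : ∃ w', 3 * u ^ 2 - 7 * v ^ 2 = 4 * w' :=
    ⟨(3 * u ^ 2 - 7 * v ^ 2) / 4, by omega⟩
  have hyw : y ^ 4 = u * w := by rw [hw] at hY; linarith
  have hxw : x = v * w' := by rw [hw'] at hX; linarith
  have hvu : IsCoprime v u := by
    have h1 : IsCoprime x (y ^ 4) := hxy.pow_right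
    rw [hyw, hxw] at h1
    exact h1.of_mul_left_left.of_mul_right_left
  have h7u : IsCoprime 7 u := by
    apply cop_of_prime p7
    intro h
    exact h7y (p7.dvd_of_dvd_pow (n := 4) (by rw [hyw]; exact h.mul_right _))
  by_cases h3 : u % 3 = 0
  · obtain ⟨k, hk⟩ : ∃ k, u = 3 * k := ⟨u / 3, by omega⟩
    obtain ⟨w2, hw2⟩ : ∃ w2, w = 3 * w2 := by
      refine ⟨w / 3, ?_⟩
      have : u ^ 2 = 3 * (3 * k ^ 2) := by rw [hk]; ring
      omega
    have e2 : 4 * w2 = 3 * k ^ 2 - 7 * v ^ 2 := by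
      rw [hk, hw2] at hw; linarith
    have h3y : (3 : ℤ) ∣ y := p3.dvd_of_dvd_pow (n := 4) ⟨k * w, by rw [hyw, hk]; ring⟩
    obtain ⟨y', hy'⟩ := h3y
    have e3 : 9 * y' ^ 4 = k * w2 := by
      rw [hy', hk, hw2] at hyw; linarith
    have hv3 : v % 3 ≠ 0 := by
      intro h
      exact p3.not_isUnit (hvu.isUnit_of_dvd' (Int.dvd_of_emod_eq_zero h)
        (Int.dvd_of_emod_eq_zero h3))
    have hv3' := sq_mod3 hv3
    have h3w2 : IsCoprime 3 w2 := cop_of_prime p3 (by omega)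
    have h9 : (9 : ℤ) ∣ k := by
      have h := h3w2.pow_left (m := 2)
      norm_num at h
      exact h.dvd_of_dvd_mul_right ⟨_, e3.symm⟩
    obtain ⟨k2, hk2⟩ := h9
    have e4 : k2 * w2 = y' ^ 4 := by rw [hk2] at e3; linarith
    have e5 : 4 * w2 = 243 * k2 ^ 2 - 7 * v ^ 2 := by rw [e2, hk2]; ring
    have hu' : u = k2 * 27 := by rw [hk, hk2]; ring
    have hco : IsCoprime k2 w2 := by
      rw [hu'] at h7u hvu
      have h1 : IsCoprime k2 (7 * v ^ 2) :=
        h7u.of_mul_right_left.symm.mul_right hvu.of_mul_right_left.symm.pow_right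
      have h2 : IsCoprime k2 (-(7 * v ^ 2) + k2 * (243 * k2)) := h1.neg_right.add_mul_left_right _
      have h4 : -(7 * v ^ 2) + k2 * (243 * k2) = 4 * w2 := by rw [e5]; ring
      rw [h4] at h2
      exact h2.of_mul_right_right
    have hy'0 : y' ≠ 0 := by rintro rfl; omega
    obtain ⟨a, b, s, hs, h1, h2⟩ := pow_split (by decide) hy'0 hco e4
    have hy'2 : (y' ^ 4) % 2 = 1 := Int.odd_iff.1 (Odd.pow (Int.odd_iff.2 (by omega)))
    have hab : IsCoprime a b := by
      rw [h1, h2] at hco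
      have := hco.of_mul_left_right.of_mul_right_right
      exact (IsCoprime.pow_iff (by norm_num) (by norm_num)).1 this
    have hodd : Odd (k2 * w2) := by rw [e4]; exact Int.odd_iff.2 hy'2
    rw [Int.odd_mul, h1, h2, Int.odd_mul, Int.odd_mul] at hodd
    have ha2 : a % 2 = 1 := Int.odd_iff.1 ((Int.odd_pow' (by norm_num)).1 hodd.1.2)
    have hb2 : b % 2 = 1 := Int.odd_iff.1 ((Int.odd_pow' (by norm_num)).1 hodd.2.2)
    have hb3 : b % 3 ≠ 0 := by
      intro h
      have h5 : (3 : ℤ) ∣ w2 := by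
        rw [h2]; exact (dvd_pow (Int.dvd_of_emod_eq_zero h) (by norm_num)).mul_left _
      omega
    have hb4 := sq_mod3' (b ^ 2)
    have hb4' : b ^ 4 = (b ^ 2) ^ 2 := by ring
    rcases hs with rfl | rfl
    · omega
    · refine caseB hab ha2 hb2 hv2 hb3 ?_
      rw [h1, h2] at e5
      linear_combination e5
  · have hco : IsCoprime u w := by
      have h3u : IsCoprime 3 u := cop_of_prime p3 (by omega)
      have h1 : IsCoprime u (3 * (7 * v ^ 2)) :=
        h3u.symm.mul_right (h7u.symm.mul_right hvu.symm.pow_right)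
      have h2 : IsCoprime u (-(3 * (7 * v ^ 2)) + u * u) := h1.neg_right.add_mul_left_right _
      have h4 : -(3 * (7 * v ^ 2)) + u * u = 4 * w := by rw [← hw]; ring
      rw [h4] at h2
      exact h2.of_mul_right_right
    obtain ⟨a, b, s, hs, h1, h2⟩ := pow_split (by decide) hy0 hco hyw.symm
    have hab : IsCoprime a b := by
      rw [h1, h2] at hco
      have := hco.of_mul_left_right.of_mul_right_right
      exact (IsCoprime.pow_iff (by norm_num) (by norm_num)).1 this
    have hodd : Odd u := Int.odd_iff.2 hu2
    rw [h1, Int.odd_mul] at hodd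
    have ha2 : a % 2 = 1 := Int.odd_iff.1 ((Int.odd_pow' (by norm_num)).1 hodd.2)
    have hb0 : b ≠ 0 := by
      rintro rfl
      rw [hyw, h2] at hy42; simp at hy42
    have ha3 : a % 3 ≠ 0 := by
      intro h
      have h5 : (3 : ℤ) ∣ u := by
        rw [h1]; exact (dvd_pow (Int.dvd_of_emod_eq_zero h) (by norm_num)).mul_left _
      omega
    have hb4 := sq_mod3' (b ^ 2)
    have hb4' : b ^ 4 = (b ^ 2) ^ 2 := by ring
    have hu3 := sq_mod3 h3
    rcases hs with rfl | rfl
    · refine caseA hab ha2 hb0 hv0 ha3 ?_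
      rw [h1, h2] at hw
      linear_combination hw
    · omega
end

section
/- There are no integers x, y, z with gcd(x,y) = 1 satisfying 7x^2 + y^{10} = 4z^3. -/
abbrev O7 := QuadraticAlgebra ℤ (-2) 1

namespace O7
open QuadraticAlgebra

theorem norm_eq (z : O7) : norm z = z.re ^ 2 + z.re * z.im + 2 * z.im ^ 2 := by
  rw [norm_def]; ring

theorem norm_nonneg (z : O7) : 0 ≤ norm z := by
  rw [norm_eq]; nlinarith [sq_nonneg (2 * z.re + z.im), sq_nonneg z.im]

theorem norm_pos {z : O7} (h : z ≠ 0) : 0 < norm z := by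
  rcases (norm_nonneg z).lt_or_eq with h1 | h1
  · exact h1
  · exfalso
    apply h
    rw [norm_eq] at h1
    have him : z.im = 0 := by
      by_contra hne
      have : 0 < z.im ^ 2 := by positivity
      nlinarith [sq_nonneg (2 * z.re + z.im)]
    have hre : z.re = 0 := by
      rw [him] at h1
      have : z.re ^ 2 = 0 := by linarith
      exact pow_eq_zero_iff (by norm_num) |>.1 this
    ext <;> simp [him, hre]

instance : NoZeroDivisors O7 where
  eq_zero_or_eq_zero_of_mul_eq_zero := by
    intro a b h
    by_contra! hc
    have h1 := mul_pos (norm_pos hc.1) (norm_pos hc.2)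
    rw [← map_mul, h] at h1
    simp at h1

instance : IsDomain O7 := NoZeroDivisors.to_isDomain _

theorem round (c n : ℤ) (hn : 0 < n) : ∃ q : ℤ, -n ≤ c - 2 * n * q ∧ c - 2 * n * q ≤ n := by
  refine ⟨(c + n) / (2 * n), ?_, ?_⟩
  · have := Int.mul_ediv_self_le (x := c + n) (k := 2 * n) (by positivity)
    linarith
  · have := Int.lt_mul_ediv_self_add (x := c + n) (k := 2 * n) (by positivity)
    linarith

theorem exists_quot (x y : O7) (hy : y ≠ 0) : ∃ q : O7, norm (x - y * q) < norm y := by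
  have hn := norm_pos hy
  set n := norm y with hnd
  obtain ⟨q2, h1, h2⟩ := round (2 * (x * star y).im) n hn
  obtain ⟨q1, h3, h4⟩ := round (2 * (x * star y).re + ((x * star y).im - n * q2)) n hn
  refine ⟨⟨q1, q2⟩, ?_⟩
  have key : (x - y * ⟨q1, q2⟩) * star y =
      ⟨(x * star y).re - n * q1, (x * star y).im - n * q2⟩ := by
    rw [hnd, norm_eq]
    ext <;> simp <;> ring
  have hN : norm (x - y * ⟨q1, q2⟩) * n < n * n := by
    rw [hnd, ← QuadraticAlgebra.norm_star y, ← map_mul, key, QuadraticAlgebra.norm_star, ← hnd,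
      norm_eq]
    dsimp only
    generalize (x * star y).re = A at *
    generalize (x * star y).im = B at *
    nlinarith
  exact lt_of_mul_lt_mul_right hN hn.le

instance : IsPrincipalIdealRing O7 where
  principal I := by
    by_cases hI : I = ⊥
    · rw [hI]; exact bot_isPrincipal
    · obtain ⟨w, hw, hw0⟩ := Submodule.exists_mem_ne_zero_of_ne_bot hI
      have hex : ∃ n : ℕ, ∃ y ∈ I, y ≠ 0 ∧ (norm y).natAbs = n := ⟨_, w, hw, hw0, rfl⟩
      classical
      obtain ⟨y, hyI, hy0, hyn⟩ := Nat.find_spec hex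
      refine ⟨⟨y, ?_⟩⟩
      apply le_antisymm
      · intro x hx
        obtain ⟨q, hq⟩ := exists_quot x y hy0
        have hm : x - y * q ∈ I := I.sub_mem hx (I.mul_mem_right _ hyI)
        have hz : x - y * q = 0 := by
          by_contra hne
          refine Nat.find_min hex (m := (norm (x - y * q)).natAbs) ?_ ⟨_, hm, hne, rfl⟩
          rw [← hyn]
          have := norm_nonneg (x - y * q)
          omega
        rw [Submodule.mem_span_singleton]
        exact ⟨q, by rw [sub_eq_zero] at hz; rw [hz, smul_eq_mul, mul_comm]⟩
      · rw [Submodule.span_singleton_le_iff_mem]; exact hyI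

theorem unit_eq (u : O7) (h : IsUnit u) : u = 1 ∨ u = -1 := by
  rw [isUnit_iff_norm_isUnit, Int.isUnit_iff] at h
  have h0 := norm_nonneg u
  have h1 : norm u = 1 := by omega
  rw [norm_eq] at h1
  have him : u.im = 0 := by
    by_contra hne
    have : 0 < u.im ^ 2 := by positivity
    nlinarith [sq_nonneg (2 * u.re + u.im)]
  rw [him] at h1
  have : u.re = 1 ∨ u.re = -1 := by
    have h2 : (u.re - 1) * (u.re + 1) = 0 := by linarith
    rcases mul_eq_zero.1 h2 with h3 | h3
    · left; linarith
    · right; linarith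
  rcases this with h | h
  · left; ext <;> simp [h, him]
  · right; ext <;> simp [h, him]

end O7

/-- the parametrisation coming from unique factorisation in `ℤ[(1+√-7)/2]` -/
theorem descent (x Y z : ℤ) (hx : Odd x) (hY : Odd Y) (hcop : IsCoprime Y z)
    (h : 7 * x ^ 2 + Y ^ 2 = 4 * z ^ 3) :
    ∃ a b : ℤ, (2 ∣ a - b) ∧ 4 * Y = a * (a ^ 2 - 21 * b ^ 2) ∧
      4 * x = b * (3 * a ^ 2 - 7 * b ^ 2) := by
  obtain ⟨u, hu⟩ : ∃ u, Y = 2 * u + x := by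
    obtain ⟨i, hi⟩ := hx
    obtain ⟨j, hj⟩ := hY
    exact ⟨j - i, by rw [hi, hj]; ring⟩
  let α : O7 := ⟨u, x⟩
  have hz : u ^ 2 + u * x + 2 * x ^ 2 = z ^ 3 := by
    rw [hu] at h; linarith
  have hmul : α * star α = (z : O7) ^ 3 := by
    rw [← Int.cast_pow]
    ext
    · rw [QuadraticAlgebra.re_intCast, Int.cast_id, ← hz]; simp [α]; ring
    · rw [QuadraticAlgebra.im_intCast]; simp [α]; ring
  have hadd : α + star α = (Y : O7) := by
    ext
    · rw [QuadraticAlgebra.re_intCast, Int.cast_id, hu]; simp [α]; ring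
    · rw [QuadraticAlgebra.im_intCast]; simp [α]
  have hc : IsCoprime α (star α) := by
    have h1 : IsCoprime (Y : O7) ((z : O7) ^ 3) := by
      have := (hcop.map (Int.castRingHom O7))
      exact IsCoprime.pow_right (by simpa using this)
    rw [← hmul, ← hadd] at h1
    have h2 := h1.of_mul_right_left
    rw [isCoprime_comm] at h2
    simpa using h2.add_mul_left_right (-1)
  obtain ⟨d, hd⟩ := exists_associated_pow_of_mul_eq_pow' hc hmul
  obtain ⟨w, hw⟩ := hd
  obtain ⟨β, hβ⟩ : ∃ β : O7, β ^ 3 = α := by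
    rcases O7.unit_eq _ w.isUnit with h | h
    · exact ⟨d, by rw [← hw, h, mul_one]⟩
    · exact ⟨-d, by rw [← hw, h]; ring⟩
  have hre := congrArg QuadraticAlgebra.re hβ
  have him := congrArg QuadraticAlgebra.im hβ
  simp [pow_succ, α] at hre him
  refine ⟨2 * β.re + β.im, β.im, ⟨β.re, by ring⟩, ?_, ?_⟩
  · rw [hu, ← hre, ← him]; ring
  · rw [← him]; ring

open NumberTheorySymbols in
theorem jac_of_primes (N m : ℕ) (hm : m ≠ 0)
    (h : ∀ p : ℕ, p.Prime → p ∣ m → J((p : ℤ) | N) = 1) : J((m : ℤ) | N) = 1 := by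
  induction m using induction_on_primes with
  | zero => exact absurd rfl hm
  | one => simp
  | prime_mul p a hp ih =>
    have ha : a ≠ 0 := by rintro rfl; simp at hm
    rw [Nat.cast_mul, jacobiSym.mul_left, h p hp (dvd_mul_right _ _),
      ih ha (fun q hq hd => h q hq (hd.mul_left _)), one_mul]

theorem gcd_prime_eq_one (p : ℕ) (hp : p.Prime) (u : ℤ) (hu : ¬ (p : ℤ) ∣ u) :
    u.gcd p = 1 := by
  rw [Int.gcd_comm]
  exact (Int.isCoprime_iff_gcd_eq_one).1
    (((Nat.prime_iff_prime_int.1 hp).coprime_iff_not_dvd).2 hu)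

open NumberTheorySymbols in
theorem jac_of_sq (p : ℕ) (hp : p.Prime) (D u v : ℤ) (hu : ¬ (p : ℤ) ∣ u) (hD : ¬ (p : ℤ) ∣ D)
    (h : (p : ℤ) ∣ D * u ^ 2 - v ^ 2) : J(D | p) = 1 := by
  have hpp := Nat.prime_iff_prime_int.1 hp
  have hv : ¬ (p : ℤ) ∣ v := by
    intro hv
    have h1 : (p : ℤ) ∣ D * u ^ 2 := by
      have := dvd_add h (hv.mul_left v)
      rwa [show D * u ^ 2 - v ^ 2 + v * v = D * u ^ 2 by ring] at this
    rcases hpp.dvd_or_dvd h1 with h2 | h2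
    · exact hD h2
    · exact hu (hpp.dvd_of_dvd_pow h2)
  have h1 : J(D * u ^ 2 | p) = J(v ^ 2 | p) :=
    jacobiSym.mod_left' (Int.emod_eq_emod_iff_emod_sub_eq_zero.2 (Int.emod_eq_zero_of_dvd h))
  rw [jacobiSym.mul_left, jacobiSym.sq_one' (gcd_prime_eq_one p hp u hu),
    jacobiSym.sq_one' (gcd_prime_eq_one p hp v hv), mul_one] at h1
  exact h1

open NumberTheorySymbols in
theorem jac_neg_seven (p : ℕ) (ho : Odd p) (h : J(-7 | p) = 1) :
    J((p : ℤ) | 7) = 1 := by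
  rw [show (-7 : ℤ) = -1 * ((7 : ℕ) : ℤ) by norm_num, jacobiSym.mul_left,
    jacobiSym.at_neg_one ho] at h
  rcases Nat.odd_mod_four_iff.1 (Nat.odd_iff.1 ho) with h4 | h4
  · rw [ZMod.χ₄_nat_one_mod_four h4, one_mul,
      jacobiSym.quadratic_reciprocity_one_mod_four' (by decide) h4] at h
    exact h
  · rw [ZMod.χ₄_nat_three_mod_four h4,
      jacobiSym.quadratic_reciprocity_three_mod_four (by decide) h4] at h
    linarith

theorem mod3 (s : ℤ) (h : ¬ (3 : ℤ) ∣ s) : s % 3 = 1 ∨ s % 3 = 2 := by omega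

theorem case_one_mod7 : ∀ s t b : ZMod 7, s ≠ 0 → s ^ 10 - 21 * b ^ 2 = 4 * t ^ 5 →
    t = 4 * s ^ 2 := by decide

theorem case_two_mod7 : ∀ s t b : ZMod 7, s ≠ 0 → 3 ^ 7 * s ^ 10 - 7 * b ^ 2 = 4 * t ^ 5 →
    t = - s ^ 2 := by decide

theorem case_one_mod3 : ∀ s t b : ZMod 3, s ≠ 0 → s ^ 10 - 21 * b ^ 2 = 4 * t ^ 5 →
    s ^ 2 - t = 0 := by decide

theorem case_two_mod3 : ∀ s t b : ZMod 3, b ≠ 0 → 3 ^ 7 * s ^ 10 - 7 * b ^ 2 = 4 * t ^ 5 →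
    t - 3 * s ^ 2 = -1 := by decide

theorem case_two_mod5 : ∀ s t b : ZMod 5, 3 ^ 7 * s ^ 10 - 7 * b ^ 2 = 4 * t ^ 5 →
    t - 3 * s ^ 2 = 2 * b ^ 2 := by decide

theorem zmod_ne (n : ℕ) (s : ℤ) (h : ¬ (n : ℤ) ∣ s) : (s : ZMod n) ≠ 0 := by
  rwa [Ne, ZMod.intCast_zmod_eq_zero_iff_dvd]

open NumberTheorySymbols in
theorem case_one (s t b : ℤ) (hcop : IsCoprime s b) (h3 : ¬ (3 : ℤ) ∣ s) (h7 : ¬ (7 : ℤ) ∣ s)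
    (h : s ^ 10 - 21 * b ^ 2 = 4 * t ^ 5) : False := by
  have m3 : (3 : ℤ) ∣ s ^ 2 - t := by
    have := case_one_mod3 s t b (zmod_ne 3 s h3) (by exact_mod_cast congrArg (Int.cast : ℤ → ZMod 3) h)
    exact (ZMod.intCast_zmod_eq_zero_iff_dvd _ 3).1 (by push_cast; exact this)
  have m7 : (t : ZMod 7) = 4 * s ^ 2 :=
    case_one_mod7 s t b (zmod_ne 7 s h7) (by exact_mod_cast congrArg (Int.cast : ℤ → ZMod 7) h)
  obtain ⟨k, hk⟩ := m3
  have hs0 : s ≠ 0 := by rintro rfl; simp at h3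
  have hfac : 4 * k * (s ^ 8 + s ^ 6 * t + s ^ 4 * t ^ 2 + s ^ 2 * t ^ 3 + t ^ 4) =
      s ^ 10 + 7 * b ^ 2 := by
    have : 3 * (4 * k * (s ^ 8 + s ^ 6 * t + s ^ 4 * t ^ 2 + s ^ 2 * t ^ 3 + t ^ 4)) =
      3 * (s ^ 10 + 7 * b ^ 2) := by
      linear_combination (-4) * (s ^ 8 + s ^ 6 * t + s ^ 4 * t ^ 2 + s ^ 2 * t ^ 3 + t ^ 4) * hk + h
    linarith
  have hkpos : 0 < k := by
    have h1 : t ^ 5 < (s ^ 2) ^ 5 := by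
      have : 0 < s ^ 10 := by positivity
      nlinarith [sq_nonneg b]
    have h2 : t < s ^ 2 := (Odd.strictMono_pow (by decide : Odd 5)).lt_iff_lt.1 h1
    linarith
  lift k to ℕ using hkpos.le
  have hJ : J((k : ℤ) | 7) = 1 := by
    apply jac_of_primes 7 k (by rintro rfl; simp at hkpos)
    intro p hp hpk
    rcases hp.eq_two_or_odd' with rfl | ho
    · norm_num
    have hpp := Nat.prime_iff_prime_int.1 hp
    have hd : (p : ℤ) ∣ s ^ 10 + 7 * b ^ 2 := by
      rw [← hfac]
      exact Dvd.dvd.mul_right (Dvd.dvd.mul_left (Int.natCast_dvd_natCast.2 hpk) _) _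
    have hpb7 : (p : ℤ) ∣ 7 → (p : ℤ) ∣ s → False := by
      intro hp7 hps
      have : p = 7 := (Nat.prime_dvd_prime_iff_eq hp (by norm_num)).1 (by exact_mod_cast hp7)
      subst this
      exact h7 hps
    have hps : ¬ (p : ℤ) ∣ s := by
      intro hps
      have h1 : (p : ℤ) ∣ 7 * b ^ 2 := (dvd_add_right (dvd_pow hps (by norm_num))).1 hd
      rcases hpp.dvd_or_dvd h1 with h2 | h2
      · exact hpb7 h2 hps
      · exact hpp.not_isUnit (hcop.isUnit_of_dvd' hps (hpp.dvd_of_dvd_pow h2))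
    have hp7 : ¬ (p : ℤ) ∣ 7 := by
      intro h2
      exact hps (hpp.dvd_of_dvd_pow ((dvd_add_left (h2.mul_right _)).1 hd))
    have hpb : ¬ (p : ℤ) ∣ b := by
      intro h2
      exact hps (hpp.dvd_of_dvd_pow ((dvd_add_left ((dvd_pow h2 (by norm_num)).mul_left _)).1 hd))
    apply jac_neg_seven p ho
    apply jac_of_sq p hp (-7) b (s ^ 5) hpb (by rwa [dvd_neg])
    have := (dvd_neg (α := ℤ)).2 hd
    rwa [show -(s ^ 10 + 7 * b ^ 2) = -7 * b ^ 2 - (s ^ 5) ^ 2 by ring] at this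
  have hk7 : ((k : ℤ) : ZMod 7) = ((-1 * s ^ 2 : ℤ) : ZMod 7) := by
    have h1 := congrArg (Int.cast : ℤ → ZMod 7) hk
    push_cast at h1 ⊢
    rw [m7] at h1
    have h35 : (15 : ZMod 7) = 1 := by decide
    have h36 : (-15 : ZMod 7) = -1 := by decide
    linear_combination (-5) * h1 - (k - (-1) * (s : ZMod 7) ^ 2) * h35
  rw [jacobiSym.mod_left' ((ZMod.intCast_eq_intCast_iff' _ _ _).1 hk7), jacobiSym.mul_left,
    jacobiSym.sq_one' (gcd_prime_eq_one 7 (by norm_num) s h7)] at hJ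
  norm_num at hJ

open NumberTheorySymbols in
theorem case_two (s t b : ℤ) (hcop : IsCoprime s b) (h3 : ¬ (3 : ℤ) ∣ b) (h7 : ¬ (7 : ℤ) ∣ s)
    (h : 3 ^ 7 * s ^ 10 - 7 * b ^ 2 = 4 * t ^ 5) : False := by
  have m3 : ((t - 3 * s ^ 2 : ℤ) : ZMod 3) = ((-1 : ℤ) : ZMod 3) := by
    push_cast
    exact case_two_mod3 s t b (zmod_ne 3 b h3)
      (by exact_mod_cast congrArg (Int.cast : ℤ → ZMod 3) h)
  have m7 : ((t - 3 * s ^ 2 : ℤ) : ZMod 7) = ((-4 * s ^ 2 : ℤ) : ZMod 7) := by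
    push_cast
    rw [case_two_mod7 s t b (zmod_ne 7 s h7)
      (by exact_mod_cast congrArg (Int.cast : ℤ → ZMod 7) h)]
    ring
  have m5 : ((t - 3 * s ^ 2 : ℤ) : ZMod 5) = ((2 * b ^ 2 : ℤ) : ZMod 5) := by
    push_cast
    exact case_two_mod5 s t b (by exact_mod_cast congrArg (Int.cast : ℤ → ZMod 5) h)
  have hfac : 4 * (t - 3 * s ^ 2) * (t ^ 4 + t ^ 3 * (3 * s ^ 2) + t ^ 2 * (3 * s ^ 2) ^ 2
      + t * (3 * s ^ 2) ^ 3 + (3 * s ^ 2) ^ 4) = 1215 * s ^ 10 - 7 * b ^ 2 := by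
    linear_combination -h
  have hndvd : ∀ p : ℕ, p.Prime → (p : ℤ) ∣ t - 3 * s ^ 2 → (p : ℤ) ∣ 1215 * s ^ 10 - 7 * b ^ 2 := by
    intro p _ hd
    rw [← hfac]
    exact Dvd.dvd.mul_right (Dvd.dvd.mul_left hd _) _
  have P5 : Prime (5 : ℤ) := Nat.prime_iff_prime_int.1 (by norm_num : Nat.Prime 5)
  have h5 : ¬ (5 : ℤ) ∣ b := by
    rintro ⟨c, rfl⟩
    have h51 : (5 : ℤ) ∣ t - 3 * s ^ 2 := by
      apply (ZMod.intCast_zmod_eq_zero_iff_dvd _ 5).1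
      push_cast at m5 ⊢
      rw [m5, show (5 : ZMod 5) = 0 by decide]; ring
    obtain ⟨e, he⟩ := h51
    have ht : t = 3 * s ^ 2 + 5 * e := by linarith
    subst ht
    have h52 : (5 : ℤ) ∣ s ^ 10 := by
      have h53 : (5 : ℤ) ∣ 243 * s ^ 10 := by
        refine ⟨7 * c ^ 2 + 4 * e * (e ^ 4 * 125 + 5 * (3 * s ^ 2) * e ^ 3 * 25
          + 10 * (3 * s ^ 2) ^ 2 * e ^ 2 * 5 + 10 * (3 * s ^ 2) ^ 3 * e + (3 * s ^ 2) ^ 4), ?_⟩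
        linarith
      exact (P5.dvd_or_dvd h53).resolve_left (by norm_num)
    have h54 : (5 : ℤ) ∣ s := P5.dvd_of_dvd_pow h52
    exact P5.not_isUnit (hcop.isUnit_of_dvd' h54 (dvd_mul_right _ _))
  set n := t - 3 * s ^ 2 with hn
  have J3 : J(n | 3) = -1 := by
    rw [jacobiSym.mod_left' ((ZMod.intCast_eq_intCast_iff' _ _ _).1 m3)]; norm_num
  have J5 : J(n | 5) = -1 := by
    rw [jacobiSym.mod_left' ((ZMod.intCast_eq_intCast_iff' _ _ _).1 m5), jacobiSym.mul_left,
      jacobiSym.sq_one' (gcd_prime_eq_one 5 (by norm_num) b h5)]; norm_num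
  have J7 : J(n | 7) = -1 := by
    rw [jacobiSym.mod_left' ((ZMod.intCast_eq_intCast_iff' _ _ _).1 m7), jacobiSym.mul_left,
      jacobiSym.sq_one' (gcd_prime_eq_one 7 (by norm_num) s h7)]; norm_num
  have hn0 : n ≠ 0 := by
    intro h0; rw [h0] at J3; norm_num at J3
  have J105 : J(n | 105) = -1 := by
    rw [show 105 = 3 * (5 * 7) by norm_num, jacobiSym.mul_right, jacobiSym.mul_right, J3, J5, J7]
    norm_num
  have nd : ∀ p : ℕ, 1 < p → J(n | p) = -1 → ¬ (p : ℤ) ∣ n := by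
    intro p hp1 hp hd
    rw [jacobiSym.mod_left, Int.emod_eq_zero_of_dvd hd, jacobiSym.zero_left hp1] at hp
    norm_num at hp
  have hJ : J((n.natAbs : ℤ) | 105) = 1 := by
    apply jac_of_primes 105 _ (by simpa using hn0)
    intro p hp hpn
    rcases hp.eq_two_or_odd' with rfl | ho
    · norm_num
    have hpp := Nat.prime_iff_prime_int.1 hp
    have hpn' : (p : ℤ) ∣ n := Int.natCast_dvd.2 hpn
    have hd := hndvd p hp hpn'
    have hp105 : ¬ (p : ℤ) ∣ 105 := by
      intro h1
      have h2 : p ∣ 3 * (5 * 7) := by exact_mod_cast h1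
      rcases (Nat.Prime.dvd_mul hp).1 h2 with h2 | h2
      · obtain rfl := (Nat.prime_dvd_prime_iff_eq hp (by norm_num)).1 h2
        exact nd 3 (by norm_num) J3 hpn'
      rcases (Nat.Prime.dvd_mul hp).1 h2 with h2 | h2
      · obtain rfl := (Nat.prime_dvd_prime_iff_eq hp (by norm_num)).1 h2
        exact nd 5 (by norm_num) J5 hpn'
      · obtain rfl := (Nat.prime_dvd_prime_iff_eq hp (by norm_num)).1 h2
        exact nd 7 (by norm_num) J7 hpn'
    have hps : ¬ (p : ℤ) ∣ s := by
      intro hps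
      have h1 : (p : ℤ) ∣ 7 * b ^ 2 :=
        (dvd_sub_right ((dvd_pow hps (by norm_num)).mul_left _)).1 hd
      rcases hpp.dvd_or_dvd h1 with h2 | h2
      · exact hp105 (h2.trans (by norm_num))
      · exact hpp.not_isUnit (hcop.isUnit_of_dvd' hps (hpp.dvd_of_dvd_pow h2))
    have hp9 : ¬ (p : ℤ) ∣ 9 * s ^ 5 := by
      intro h1
      rcases hpp.dvd_or_dvd h1 with h2 | h2
      · have h4 : (p : ℤ) ∣ 3 := hpp.dvd_of_dvd_pow (n := 2) (by norm_num; exact h2)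
        exact hp105 (h4.trans (by norm_num))
      · exact hps (hpp.dvd_of_dvd_pow h2)
    rw [jacobiSym.quadratic_reciprocity_one_mod_four' ho (by norm_num)]
    apply jac_of_sq p hp _ (9 * s ^ 5) (7 * b) hp9 hp105
    have := hd.mul_left 7
    rwa [show 7 * (1215 * s ^ 10 - 7 * b ^ 2) =
      ((105 : ℕ) : ℤ) * (9 * s ^ 5) ^ 2 - (7 * b) ^ 2 by push_cast; ring] at this
  rcases Int.natAbs_eq n with h1 | h1
  · rw [← h1, J105] at hJ; norm_num at hJ
  · rw [show (n.natAbs : ℤ) = -1 * n by linarith, jacobiSym.mul_left, J105] at hJ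
    norm_num at hJ

theorem isCoprime_of_primes (a b : ℤ)
    (h : ∀ p : ℕ, p.Prime → (p : ℤ) ∣ a → (p : ℤ) ∣ b → False) : IsCoprime a b := by
  rw [Int.isCoprime_iff_gcd_eq_one]
  by_contra hne
  obtain ⟨p, hp, hd⟩ := Nat.exists_prime_and_dvd hne
  have hd' : (p : ℤ) ∣ (Int.gcd a b : ℤ) := Int.natCast_dvd_natCast.2 hd
  exact h p hp (hd'.trans (Int.gcd_dvd_left ..)) (hd'.trans (Int.gcd_dvd_right ..))

theorem eq_of_dvd_prime (p q : ℕ) (hp : p.Prime) (hq : q.Prime) (h : (p : ℤ) ∣ (q : ℤ)) : p = q :=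
  (Nat.prime_dvd_prime_iff_eq hp hq).1 (Int.natCast_dvd_natCast.1 h)

theorem no_primitive_solutions_7x2_y10_4z3 :
    ¬ ∃ x y z : ℤ, Int.gcd x y = 1 ∧ 7 * x ^ 2 + y ^ 10 = 4 * z ^ 3 := by
  rintro ⟨x, y, z, hxy, h⟩
  have hcop : IsCoprime x y := Int.isCoprime_iff_gcd_eq_one.2 hxy
  have hP : ∀ p : ℕ, p.Prime → (p : ℤ) ∣ x → (p : ℤ) ∣ y → False := fun p hp h1 h2 =>
    (Nat.prime_iff_prime_int.1 hp).not_isUnit (hcop.isUnit_of_dvd' h1 h2)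
  have P7 : Prime (7 : ℤ) := Nat.prime_iff_prime_int.1 (by norm_num : Nat.Prime 7)
  -- parity
  have hpar : Odd x ∧ Odd y := by
    have h4 : ∀ x y z : ZMod 4, 7 * x ^ 2 + y ^ 10 = 4 * z ^ 3 →
        (2 * x = 0 ∧ 2 * y = 0) ∨ (2 * x ≠ 0 ∧ 2 * y ≠ 0) := by decide
    have hz : ∀ w : ℤ, (2 * (w : ZMod 4) = 0) ↔ (2 : ℤ) ∣ w := by
      intro w
      have h1 := ZMod.intCast_zmod_eq_zero_iff_dvd (2 * w) 4
      push_cast at h1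
      rw [h1]
      omega
    have := h4 x y z (by exact_mod_cast congrArg (Int.cast : ℤ → ZMod 4) h)
    simp only [ne_eq, hz] at this
    rcases this with ⟨h1, h2⟩ | ⟨h1, h2⟩
    · exact (hP 2 Nat.prime_two h1 h2).elim
    · exact ⟨by rw [Int.odd_iff]; omega, by rw [Int.odd_iff]; omega⟩
  obtain ⟨hx, hy⟩ := hpar
  have h7y : ¬ (7 : ℤ) ∣ y := by
    rintro ⟨w, rfl⟩
    have hz : (7 : ℤ) ∣ z := by
      have h1 : (7 : ℤ) ∣ 4 * z ^ 3 := by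
        rw [← h]; exact ⟨x ^ 2 + 7 ^ 9 * w ^ 10, by ring⟩
      exact P7.dvd_of_dvd_pow ((P7.dvd_or_dvd h1).resolve_left (by norm_num))
    obtain ⟨v, rfl⟩ := hz
    have h1 : (7 : ℤ) ∣ x ^ 2 := ⟨28 * v ^ 3 - 7 ^ 8 * w ^ 10, by linarith⟩
    exact hP 7 (by norm_num) (P7.dvd_of_dvd_pow h1) (dvd_mul_right _ _)
  have hyz : IsCoprime (y ^ 5) z := by
    apply IsCoprime.pow_left
    apply isCoprime_of_primes
    intro p hp h1 h2
    have hpp := Nat.prime_iff_prime_int.1 hp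
    have h3 : (p : ℤ) ∣ 7 * x ^ 2 := by
      have h4 : (p : ℤ) ∣ 7 * x ^ 2 + y ^ 10 := by
        rw [h]; exact (dvd_pow h2 (by norm_num)).mul_left _
      exact (dvd_add_left (dvd_pow h1 (by norm_num))).1 h4
    rcases hpp.dvd_or_dvd h3 with h4 | h4
    · obtain rfl := eq_of_dvd_prime p 7 hp (by norm_num) h4
      exact h7y h1
    · exact hP p hp (hpp.dvd_of_dvd_pow h4) h1
  obtain ⟨a, b, hab2, hY, hX⟩ := descent x (y ^ 5) z hx hy.pow hyz (by rw [← h]; ring)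
  -- `a` and `b` are odd
  have haodd : Odd a := by
    by_contra hne
    rw [Int.not_odd_iff_even, even_iff_two_dvd] at hne
    obtain ⟨a', rfl⟩ := hne
    have hb : (2 : ℤ) ∣ b := by omega
    obtain ⟨b', rfl⟩ := hb
    have h1 : y ^ 5 = 2 * (a' * (a' ^ 2 - 21 * b' ^ 2)) := by linarith
    have h2 := hy.pow (n := 5)
    rw [h1, Int.odd_iff] at h2
    omega
  have hbodd : Odd b := by
    rw [Int.odd_iff] at haodd ⊢; omega
  have hPab : ∀ p : ℕ, p.Prime → (p : ℤ) ∣ a → (p : ℤ) ∣ b → False := by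
    intro p hp h1 h2
    have hpp := Nat.prime_iff_prime_int.1 hp
    have hp4 : ¬ (p : ℤ) ∣ 4 := by
      intro h4
      have h5 : (p : ℤ) ∣ ((2 : ℕ) : ℤ) := hpp.dvd_of_dvd_pow (n := 2) (by norm_num; exact h4)
      obtain rfl := eq_of_dvd_prime p 2 hp (by norm_num) h5
      rw [Int.odd_iff] at haodd
      push_cast at h1
      omega
    have h3 : (p : ℤ) ∣ 4 * y ^ 5 := by rw [hY]; exact h1.mul_right _
    have h4 : (p : ℤ) ∣ 4 * x := by rw [hX]; exact h2.mul_right _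
    exact hP p hp ((hpp.dvd_or_dvd h4).resolve_left hp4)
      (hpp.dvd_of_dvd_pow ((hpp.dvd_or_dvd h3).resolve_left hp4))
  have h7a : ¬ (7 : ℤ) ∣ a := by
    intro h1
    have h3 : (7 : ℤ) ∣ 4 * y ^ 5 := by rw [hY]; exact h1.mul_right _
    exact h7y (P7.dvd_of_dvd_pow ((P7.dvd_or_dvd h3).resolve_left (by norm_num)))
  obtain ⟨Q, hQ⟩ : ∃ Q, a ^ 2 - 21 * b ^ 2 = 4 * Q := by
    obtain ⟨i, hi⟩ := haodd
    obtain ⟨j, hj⟩ := hbodd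
    exact ⟨i ^ 2 + i - 21 * (j ^ 2 + j) - 5, by rw [hi, hj]; ring⟩
  have hyQ : a * Q = y ^ 5 := by
    rw [hQ] at hY; linarith
  by_cases h3a : (3 : ℤ) ∣ a
  · -- second case
    obtain ⟨c, rfl⟩ := h3a
    have h3b : ¬ (3 : ℤ) ∣ b := fun h1 => hPab 3 (by norm_num) (dvd_mul_right _ _) h1
    obtain ⟨R, rfl⟩ : (3 : ℤ) ∣ Q := by
      have h1 : (3 : ℤ) ∣ 4 * Q := ⟨3 * c ^ 2 - 7 * b ^ 2, by rw [← hQ]; ring⟩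
      exact (Int.prime_three.dvd_or_dvd h1).resolve_left (by norm_num)
    have hR : 3 * c ^ 2 - 7 * b ^ 2 = 4 * R := by linarith
    have h3R : ¬ (3 : ℤ) ∣ R := by
      intro h1
      have h2 : (3 : ℤ) ∣ 7 * b ^ 2 := by
        have h4 : (3 : ℤ) ∣ 3 * c ^ 2 - 7 * b ^ 2 := by rw [hR]; exact h1.mul_left _
        exact (dvd_sub_right (dvd_mul_right _ _)).1 h4
      exact h3b (Int.prime_three.dvd_of_dvd_pow
        ((Int.prime_three.dvd_or_dvd h2).resolve_left (by norm_num)))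
    obtain ⟨w, rfl⟩ : (3 : ℤ) ∣ y := by
      have h1 : (3 : ℤ) ∣ y ^ 5 := ⟨3 * c * R, by rw [← hyQ]; ring⟩
      exact Int.prime_three.dvd_of_dvd_pow h1
    have hw : c * R = 3 ^ 3 * w ^ 5 := by linarith
    obtain ⟨e, rfl⟩ : (3 : ℤ) ^ 3 ∣ c := by
      have h1 : IsCoprime ((3 : ℤ) ^ 3) R :=
        IsCoprime.pow_left ((Int.prime_three.coprime_iff_not_dvd).2 h3R)
      exact h1.dvd_of_dvd_mul_right ⟨_, hw⟩
    have heR : e * R = w ^ 5 := by linarith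
    have hcop2 : IsCoprime e R := by
      apply isCoprime_of_primes
      intro p hp h1 h2
      have hpp := Nat.prime_iff_prime_int.1 hp
      have h4 : (p : ℤ) ∣ 7 * b ^ 2 := by
        have h5 : (p : ℤ) ∣ 3 * (3 ^ 3 * e) ^ 2 - 7 * b ^ 2 := by rw [hR]; exact h2.mul_left _
        exact (dvd_sub_right ((dvd_pow (h1.mul_left _) (by norm_num)).mul_left _)).1 h5
      have hpa : (p : ℤ) ∣ 3 * (3 ^ 3 * e) := (h1.mul_left _).mul_left _
      rcases hpp.dvd_or_dvd h4 with h5 | h5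
      · obtain rfl := eq_of_dvd_prime p 7 hp (by norm_num) h5
        exact h7a hpa
      · exact hPab p hp hpa (hpp.dvd_of_dvd_pow h5)
    obtain ⟨⟨s, rfl⟩, ⟨t, rfl⟩⟩ := Int.eq_pow_of_mul_eq_pow_odd hcop2 (by decide) heR
    refine case_two s t b ?_ h3b ?_ (by rw [← hR]; ring)
    · apply isCoprime_of_primes
      intro p hp h1 h2
      exact hPab p hp (((dvd_pow h1 (by norm_num)).mul_left _).mul_left _) h2
    · intro h1
      exact h7a (((dvd_pow h1 (by norm_num)).mul_left _).mul_left _)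
  · have hcop2 : IsCoprime a Q := by
      apply isCoprime_of_primes
      intro p hp h1 h2
      have hpp := Nat.prime_iff_prime_int.1 hp
      have h4 : (p : ℤ) ∣ 21 * b ^ 2 := by
        have h5 : (p : ℤ) ∣ a ^ 2 - 21 * b ^ 2 := by rw [hQ]; exact h2.mul_left _
        exact (dvd_sub_right (dvd_pow h1 (by norm_num))).1 h5
      rcases hpp.dvd_or_dvd h4 with h5 | h5
      · rw [show (21 : ℤ) = 3 * 7 by norm_num] at h5
        rcases hpp.dvd_or_dvd h5 with h6 | h6
        · obtain rfl := eq_of_dvd_prime p 3 hp (by norm_num) h6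
          exact h3a h1
        · obtain rfl := eq_of_dvd_prime p 7 hp (by norm_num) h6
          exact h7a h1
      · exact hPab p hp h1 (hpp.dvd_of_dvd_pow h5)
    obtain ⟨⟨s, rfl⟩, ⟨t, rfl⟩⟩ := Int.eq_pow_of_mul_eq_pow_odd hcop2 (by decide) hyQ
    refine case_one s t b ?_ ?_ ?_ (by rw [← hQ]; ring)
    · apply isCoprime_of_primes
      intro p hp h1 h2
      exact hPab p hp (dvd_pow h1 (by norm_num)) h2
    · exact fun h1 => h3a (dvd_pow h1 (by norm_num))
    · exact fun h1 => h7a (dvd_pow h1 (by norm_num))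
end
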